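/- arXiv:2409.09215 — 4 statements merged into one kernel-verified Lean document; each statement's English description precedes it below -/
import Mathlib

section
/- For every 0 < κ < 1 and every u ≥ 0 one has θ_κ(u) ≤ 1. (Part of Lemma 1; equivalently, 1 − θ_κ(u) = (c₁(κ)/c₂(κ))·K_{(κ−1)/2}(u)·u^{(1−κ)/2} ≥ 0 since K_{(κ−1)/2} is nonnegative.) -/
open Real MeasureTheory Filter

noncomputable def c1 (k : ℝ) : ℝ := (2:ℝ) ^ ((1 - k)/2) / (Real.sqrt π * Real.Gamma (k/2))

noncomputable def c2 (k : ℝ) : ℝ := 1 / (2 * Real.Gamma k * Real.cos (k * π / 2))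

/-- Modified Bessel function of the second kind:
`K ν z = (1/2) ∫₀^∞ s^(ν−1) exp(−(z/2)(s + 1/s)) ds`. -/
noncomputable def besselK (ν z : ℝ) : ℝ :=
  (1/2) * ∫ s in Set.Ioi (0:ℝ), s ^ (ν - 1) * Real.exp (-(z/2) * (s + 1/s))

/-- The function `θ_κ(u)` from Lemma 1. -/
noncomputable def theta (k u : ℝ) : ℝ :=
  Real.Gamma ((k+1)/2) *
    ((2:ℝ)^(k-1) * u^(1-k) / Real.Gamma ((3-k)/2)
      + ∑' m : ℕ, (u/2) ^ (2*((m:ℝ)+1) - k + 1) /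
          ((Nat.factorial (m+1)) * Real.Gamma (((m:ℝ)+1) + (3-k)/2))
      - ∑' m : ℕ, (u/2) ^ (2*((m:ℝ)+1)) /
          ((Nat.factorial (m+1)) * Real.Gamma (((m:ℝ)+1) + (k+1)/2)))

/-- The series `∑ y^m / (m! Γ(m+1+c))`. -/
noncomputable def besPhi (c y : ℝ) : ℝ :=
  ∑' m : ℕ, y ^ m / ((Nat.factorial m : ℝ) * Real.Gamma ((m:ℝ) + 1 + c))

lemma bes_Gamma_pos {c : ℝ} (hc : -1 < c) (m : ℕ) : 0 < Real.Gamma ((m:ℝ) + 1 + c) := by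
  apply Real.Gamma_pos_of_pos
  have : (0:ℝ) ≤ m := Nat.cast_nonneg m
  linarith

lemma bes_Gamma_inv_bound {c : ℝ} (hc : -1 < c) :
    ∃ C : ℝ, 0 ≤ C ∧ ∀ m : ℕ, (Real.Gamma ((m:ℝ) + 1 + c))⁻¹ ≤ C := by
  have h0 := inv_pos.2 (bes_Gamma_pos hc 0)
  have h1 := inv_pos.2 (bes_Gamma_pos hc 1)
  refine ⟨(Real.Gamma (((0:ℕ):ℝ) + 1 + c))⁻¹ + (Real.Gamma (((1:ℕ):ℝ) + 1 + c))⁻¹ + 1,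
    by positivity, ?_⟩
  intro m
  match m with
  | 0 => linarith
  | 1 => linarith
  | (n+2) =>
    have hn : (0:ℝ) ≤ n := Nat.cast_nonneg n
    have : 1 ≤ Real.Gamma (((n+2:ℕ):ℝ) + 1 + c) := by
      refine Real.Gamma_two.symm.le.trans ?_
      apply Real.Gamma_strictMonoOn_Ici.monotoneOn
      · simp
      · simp only [Set.mem_Ici]; push_cast; linarith
      · push_cast; linarith
    have := inv_le_one_of_one_le₀ this
    linarith

lemma bes_summable {c : ℝ} (hc : -1 < c) (y : ℝ) :
    Summable fun m : ℕ => y ^ m / ((Nat.factorial m : ℝ) * Real.Gamma ((m:ℝ) + 1 + c)) := by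
  obtain ⟨C, hC, hb⟩ := bes_Gamma_inv_bound hc
  refine Summable.of_norm_bounded
    ((Real.summable_pow_div_factorial |y|).mul_right C) ?_
  intro m
  have hp := bes_Gamma_pos hc m
  rw [norm_div, norm_pow, norm_mul, Real.norm_eq_abs, Real.norm_eq_abs, Real.norm_eq_abs,
    abs_of_pos hp, Nat.abs_cast, ← div_div, div_eq_mul_inv (_ / _)]
  exact mul_le_mul_of_nonneg_left (hb m) (by positivity)

lemma bes_hasDerivAt {c : ℝ} (hc : -1 < c) (y : ℝ) :
    HasDerivAt (besPhi c) (besPhi (c+1) y) y := by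
  have hc' : -1 < c + 1 := by linarith
  have key : ∀ n : ℕ, ∀ z : ℝ, HasDerivAt
      (fun z : ℝ => z ^ n / ((Nat.factorial n : ℝ) * Real.Gamma ((n:ℝ) + 1 + c)))
      (n * z ^ (n-1) / ((Nat.factorial n : ℝ) * Real.Gamma ((n:ℝ) + 1 + c))) z := by
    intro n z
    exact (hasDerivAt_pow n z).div_const _
  have e : ∀ (z : ℝ) (n : ℕ), ((n+1:ℕ):ℝ) * z ^ (n+1-1) /
      ((Nat.factorial (n+1) : ℝ) * Real.Gamma (((n+1:ℕ):ℝ) + 1 + c))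
      = z ^ n / ((Nat.factorial n : ℝ) * Real.Gamma ((n:ℝ) + 1 + (c+1))) := by
    intro z n
    have hg := bes_Gamma_pos hc' n
    have e1 : ((n+1:ℕ):ℝ) + 1 + c = (n:ℝ) + 1 + (c+1) := by push_cast; ring
    rw [e1, Nat.factorial_succ]
    have : (Nat.factorial n : ℝ) ≠ 0 := by positivity
    have : ((n:ℝ)+1) ≠ 0 := by positivity
    push_cast
    field_simp
    try simp
  have hs : ∀ z : ℝ, Summable (fun n : ℕ => (n:ℝ) * z ^ (n-1) /
      ((Nat.factorial n : ℝ) * Real.Gamma ((n:ℝ) + 1 + c))) := by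
    intro z
    rw [← summable_nat_add_iff 1]
    exact (bes_summable hc' z).congr (fun n => (e z n).symm)
  have hmain := hasDerivAt_tsum_of_isPreconnected (hs (|y|+1)) (t := Metric.ball (0:ℝ) (|y|+1))
    (y₀ := y) (y := y) Metric.isOpen_ball (convex_ball _ _).isPreconnected
    (fun n z _ => key n z) ?_ ?_ (bes_summable hc y) ?_
  · refine HasDerivAt.congr_deriv hmain ?_
    rw [(hs y).tsum_eq_zero_add]
    simp only [besPhi, e]
    simp
  · intro n z hz
    have hz' : |z| ≤ |y| + 1 := by
      have : |z| < |y| + 1 := by simpa using hz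
      exact this.le
    have hp := bes_Gamma_pos hc n
    rw [norm_div, norm_mul, norm_mul, norm_pow, Real.norm_eq_abs, Real.norm_eq_abs,
      Real.norm_eq_abs, Real.norm_eq_abs, abs_of_pos hp, Nat.abs_cast, Nat.abs_cast]
    gcongr
  · simp
  · simp

lemma bes_rec {c : ℝ} (hc : 0 < c) (y : ℝ) :
    besPhi (c-1) y = c * besPhi c y + y * besPhi (c+1) y := by
  have h0 := bes_summable (show -1 < c - 1 by linarith) y
  have h1 := bes_summable (show -1 < c by linarith) y
  have h2 := bes_summable (show -1 < c + 1 by linarith) y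
  unfold besPhi
  rw [h0.tsum_eq_zero_add, h1.tsum_eq_zero_add, mul_add, ← tsum_mul_left, ← tsum_mul_left,
    add_assoc (c * _), ← Summable.tsum_add]
  · congr 1
    · have := Real.Gamma_add_one hc.ne'
      have hg := (Real.Gamma_pos_of_pos hc).ne'
      simp [add_comm 1 c, this]
      field_simp
    · apply tsum_congr
      intro n
      have hn : (0:ℝ) ≤ n := Nat.cast_nonneg n
      have e1 : ((n+1:ℕ):ℝ) + 1 + (c-1) = n + 1 + c := by push_cast; ring
      have e2 : ((n+1:ℕ):ℝ) + 1 + c = (n + 1 + c) + 1 := by push_cast; ring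
      have e3 : (n:ℝ) + 1 + (c+1) = (n + 1 + c) + 1 := by ring
      have hpos : 0 < (n:ℝ) + 1 + c := by linarith
      rw [e1, e2, e3, Real.Gamma_add_one hpos.ne', Nat.factorial_succ]
      have hg := (Real.Gamma_pos_of_pos hpos).ne'
      have : (Nat.factorial n : ℝ) ≠ 0 := by positivity
      have : ((n:ℝ)+1) ≠ 0 := by positivity
      push_cast
      field_simp
      ring
  · exact ((summable_nat_add_iff 1).2 h1).mul_left c
  · exact h2.mul_left y

lemma bes_pos {c : ℝ} (hc : -1 < c) {y : ℝ} (hy : 0 < y) : 0 < besPhi c y := by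
  refine (bes_summable hc y).tsum_pos (fun m => ?_) 0 ?_
  · have := bes_Gamma_pos hc m; positivity
  · have := bes_Gamma_pos hc 0; positivity

lemma bes_wronskian {v : ℝ} (hv : 0 < v) (hv1 : v < 1) (y : ℝ) :
    0 < besPhi (v-1) y * besPhi (-v) y - y * (besPhi v y * besPhi (1-v) y) := by
  set W : ℝ → ℝ := fun y => besPhi (v-1) y * besPhi (-v) y - y * (besPhi v y * besPhi (1-v) y)
    with hW
  have hd : ∀ y, HasDerivAt W 0 y := by
    intro y
    have d1 := bes_hasDerivAt (show -1 < v - 1 by linarith) y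
    have d2 := bes_hasDerivAt (show -1 < -v by linarith) y
    have d3 := bes_hasDerivAt (show -1 < v by linarith) y
    have d4 := bes_hasDerivAt (show -1 < 1 - v by linarith) y
    have r1 := bes_rec hv y
    have r2 := bes_rec (show 0 < 1 - v by linarith) y
    rw [show v - 1 + 1 = v by ring] at d1
    rw [show -v + 1 = 1 - v by ring] at d2
    rw [show 1 - v - 1 = -v by ring] at r2
    have := (d1.mul d2).sub ((hasDerivAt_id y).mul (d3.mul d4))
    refine this.congr_deriv ?_
    simp only [id, Pi.mul_apply]
    rw [r1, r2]
    ring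
  have hc := is_const_of_deriv_eq_zero (fun y => (hd y).differentiableAt) (fun y => (hd y).deriv)
  have h0 : W y = W 0 := hc y 0
  have hz : ∀ c, besPhi c 0 = (Real.Gamma (1 + c))⁻¹ := by
    intro c
    unfold besPhi
    rw [tsum_eq_single 0]
    · simp
    · intro b hb; simp [hb]
  change 0 < W y
  rw [h0]
  simp only [hW, hz, zero_mul, sub_zero]
  have a1 := Real.Gamma_pos_of_pos (show 0 < 1 + (v-1) by linarith)
  have a2 := Real.Gamma_pos_of_pos (show 0 < 1 + (-v) by linarith)
  positivity

lemma bes_ratio_mono {v : ℝ} (hv : 0 < v) (hv1 : v < 1) :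
    MonotoneOn (fun y => y ^ v * besPhi v y / besPhi (-v) y) (Set.Ioi 0) := by
  have hd : ∀ y ∈ Set.Ioi (0:ℝ), HasDerivAt (fun y => y ^ v * besPhi v y / besPhi (-v) y)
      (y ^ (v-1) * (besPhi (v-1) y * besPhi (-v) y - y * (besPhi v y * besPhi (1-v) y))
        / (besPhi (-v) y)^2) y := by
    intro y hy
    have hy : 0 < y := hy
    have d2 := bes_hasDerivAt (show -1 < -v by linarith) y
    have d3 := bes_hasDerivAt (show -1 < v by linarith) y
    have r1 := bes_rec hv y
    rw [show -v + 1 = 1 - v by ring] at d2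
    have hp := bes_pos (show -1 < -v by linarith) hy
    have := ((Real.hasDerivAt_rpow_const (p := v) (Or.inl hy.ne')).mul d3).div d2 hp.ne'
    refine this.congr_deriv ?_
    simp only [Pi.mul_apply]
    rw [r1]
    have : y ^ v = y ^ (v-1) * y := by
      rw [Real.rpow_sub_one hy.ne']; field_simp
    rw [this]
    ring
  apply monotoneOn_of_deriv_nonneg (convex_Ioi 0)
  · exact fun y hy => (hd y hy).continuousAt.continuousWithinAt
  · intro y hy
    rw [interior_Ioi] at hy
    exact (hd y hy).differentiableAt.differentiableWithinAt
  · intro y hy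
    rw [interior_Ioi] at hy
    rw [(hd y hy).deriv]
    have hy : 0 < y := hy
    have := bes_wronskian hv hv1 y
    positivity

lemma bes_Gamma_ineq {v s : ℝ} (hv : 0 < v) (hv1 : v < 1) (hs : 0 < s) :
    Real.Gamma (s + 1 - v) * s ^ v ≤ Real.Gamma (s + 1) := by
  have h := Real.Gamma_mul_add_mul_le_rpow_Gamma_mul_rpow_Gamma (s := s+1) (t := s)
    (a := 1 - v) (b := v) (by linarith) hs (by linarith) hv (by ring)
  have hg := Real.Gamma_pos_of_pos hs
  have hsv : 0 < s ^ v := Real.rpow_pos_of_pos hs v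
  have e : Real.Gamma (s+1) ^ (1-v) * Real.Gamma s ^ v * s ^ v = Real.Gamma (s+1) := by
    rw [mul_assoc, ← Real.mul_rpow hg.le hs.le, mul_comm (Real.Gamma s), ← Real.Gamma_add_one hs.ne',
      ← Real.rpow_add (Real.Gamma_pos_of_pos (by linarith))]
    simp
  rw [show (1-v)*(s+1) + v*s = s + 1 - v by ring] at h
  calc _ ≤ Real.Gamma (s+1) ^ (1-v) * Real.Gamma s ^ v * s ^ v := by gcongr
    _ = _ := e

/-- upper termwise bound -/
lemma bes_term_upper {v x : ℝ} (hv : 0 < v) (hv1 : v < 1) (hx : 0 < x) (m : ℕ) :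
    x ^ v * Real.Gamma ((m:ℝ) + 2) ≤
      ((1-v) * ((m:ℝ) + 1 + v) + v * x) * Real.Gamma ((m:ℝ) + 1 + v) := by
  have hm : (0:ℝ) ≤ m := Nat.cast_nonneg m
  set t : ℝ := (m:ℝ) + 1 + v with ht
  have htp : 0 < t := by linarith
  have h1 := bes_Gamma_ineq hv hv1 htp
  rw [show t + 1 - v = (m:ℝ) + 2 by rw [ht]; ring, Real.Gamma_add_one htp.ne'] at h1
  have h2 := Real.geom_mean_le_arith_mean2_weighted (w₁ := 1 - v) (w₂ := v) (p₁ := t) (p₂ := x)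
    (by linarith) hv.le htp.le hx.le (by ring)
  have hg := Real.Gamma_pos_of_pos htp
  have hxv : 0 < x ^ v := Real.rpow_pos_of_pos hx v
  have htv : 0 < t ^ (1-v) := Real.rpow_pos_of_pos htp _
  have e : t ^ v * t ^ (1-v) = t := by
    rw [← Real.rpow_add htp]; simp
  refine le_of_mul_le_mul_left ?_ htp
  calc t * (x ^ v * Real.Gamma ((m:ℝ)+2))
      = (Real.Gamma ((m:ℝ)+2) * t ^ v) * (t ^ (1-v) * x ^ v) := by
        nth_rewrite 1 [← e]; ring
    _ ≤ (t * Real.Gamma t) * ((1-v) * t + v * x) := by gcongr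
    _ = _ := by ring

/-- lower termwise bound -/
lemma bes_term_lower {v x : ℝ} (hv : 0 < v) (hv1 : v < 1) (hx : 0 < x) (m : ℕ) :
    ((1+v) * ((m:ℝ) + 1 - v) - v * x) * (Real.Gamma ((m:ℝ) + 1 + -v) * x ^ v)
      ≤ Real.Gamma ((m:ℝ) + 2) := by
  have hm : (0:ℝ) ≤ m := Nat.cast_nonneg m
  set n : ℝ := (m:ℝ) + 1 with hn
  have hnp : 0 < n := by linarith
  have hnv : 0 < n - v := by linarith
  have h1 := bes_Gamma_ineq hv hv1 hnp
  rw [show n + 1 - v = (n - v) + 1 by ring, Real.Gamma_add_one hnv.ne',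
    show n + 1 = (m:ℝ) + 2 by rw [hn]; ring] at h1
  refine le_trans ?_ h1
  rw [show n + -v = n - v by ring]
  have hg := Real.Gamma_pos_of_pos hnv
  have hxn : 0 < x / n := by positivity
  have h2 := Real.geom_mean_le_arith_mean2_weighted (w₁ := 1 - v) (w₂ := v) (p₁ := 1) (p₂ := x/n)
    (by linarith) hv.le zero_le_one hxn.le (by ring)
  rw [Real.one_rpow, one_mul, mul_one] at h2
  set r : ℝ := (x/n) ^ v with hr
  have hrp : 0 < r := Real.rpow_pos_of_pos hxn v
  have hnvp : 0 < n ^ v := Real.rpow_pos_of_pos hnp v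
  have exv : x ^ v = r * n ^ v := by
    rw [hr, ← Real.mul_rpow hxn.le hnp.le]; congr 1; field_simp
  rw [exv]
  have h3 : (n - v) * (r - 1 + v) ≤ v * x := by
    have a : (n - v) * (r - 1 + v) ≤ (n - v) * (v * (x/n)) := by
      apply mul_le_mul_of_nonneg_left _ hnv.le; linarith
    have b : (n - v) * (v * (x/n)) ≤ n * (v * (x/n)) := by
      apply mul_le_mul_of_nonneg_right _ (by positivity); linarith
    have c : n * (v * (x/n)) = v * x := by field_simp
    linarith
  have h4 : ((1+v) * (n - v) - v * x) * r ≤ n - v := by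
    have a : ((1+v) * (n - v) - v * x) * r ≤ ((n - v) * (2 - r)) * r := by
      apply mul_le_mul_of_nonneg_right _ hrp.le; linarith
    nlinarith [mul_nonneg hnv.le (sq_nonneg (r - 1))]
  calc _ = (((1+v) * (n - v) - v * x) * r) * (Real.Gamma (n-v) * n ^ v) := by ring
    _ ≤ (n - v) * (Real.Gamma (n-v) * n ^ v) := by gcongr
    _ = _ := by ring

lemma bes_zero_one {x : ℝ} (hx : 0 < x) : x * besPhi 1 (x^2) ≤ besPhi 0 (x^2) := by
  have h0 := bes_summable (show (-1:ℝ) < 0 by norm_num) (x^2)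
  have h1 := bes_summable (show (-1:ℝ) < 1 by norm_num) (x^2)
  have h0' := (summable_nat_add_iff 1).2 h0
  have key : x * besPhi 1 (x^2) ≤ (1/2) * (besPhi 0 (x^2) + ∑' m : ℕ, (x^2) ^ (m+1) /
      ((Nat.factorial (m+1) : ℝ) * Real.Gamma (((m+1:ℕ):ℝ) + 1 + 0))) := by
    unfold besPhi
    rw [← h0.tsum_add h0', ← tsum_mul_left, ← tsum_mul_left]
    refine Summable.tsum_le_tsum ?_ (h1.mul_left _) ((h0.add h0').mul_left _)
    intro m
    have e1 : Real.Gamma ((m:ℝ) + 1 + 1) = (Nat.factorial (m+1) : ℝ) := by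
      rw [← Real.Gamma_nat_eq_factorial]; push_cast; rfl
    rw [add_zero, add_zero, e1, Real.Gamma_nat_eq_factorial, Real.Gamma_nat_eq_factorial]
    have p0 : (0:ℝ) < Nat.factorial m := by positivity
    have p1 : (0:ℝ) < Nat.factorial (m+1) := by positivity
    have := sq_nonneg (x^m / (Nat.factorial m : ℝ) - x^(m+1) / (Nat.factorial (m+1) : ℝ))
    have e2 : (x^2)^m / ((Nat.factorial m : ℝ) * Nat.factorial m) = (x^m / (Nat.factorial m : ℝ))^2 := by
      rw [div_pow, ← pow_mul, ← pow_mul, mul_comm, sq (Nat.factorial m : ℝ)]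
    have e3 : (x^2)^(m+1) / ((Nat.factorial (m+1) : ℝ) * Nat.factorial (m+1))
        = (x^(m+1) / (Nat.factorial (m+1) : ℝ))^2 := by
      rw [div_pow, ← pow_mul, ← pow_mul, mul_comm, sq (Nat.factorial (m+1) : ℝ)]
    have e4 : x * ((x^2)^m / ((Nat.factorial m : ℝ) * Nat.factorial (m+1)))
        = (x^m / (Nat.factorial m : ℝ)) * (x^(m+1) / (Nat.factorial (m+1) : ℝ)) := by
      field_simp
      ring
    rw [e2, e3, e4]
    linarith
  have : besPhi 0 (x^2) = _ + _ := h0.tsum_eq_zero_add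
  have hp : (0:ℝ) < (x^2)^0 / ((Nat.factorial 0 : ℝ) * Real.Gamma (((0:ℕ):ℝ) + 1 + 0)) := by
    simp
  linarith

lemma bes_upper {v x : ℝ} (hv : 0 < v) (hv1 : v < 1) (hx : 0 < x) :
    x ^ v * besPhi v (x^2) ≤
      (1-v) * besPhi 0 (x^2) + ((1-v) * v + v * x) * besPhi 1 (x^2) := by
  have h0 := bes_summable (show (-1:ℝ) < 0 by norm_num) (x^2)
  have h1 := bes_summable (show (-1:ℝ) < 1 by norm_num) (x^2)
  have hh := bes_summable (show (-1:ℝ) < v by linarith) (x^2)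
  unfold besPhi
  rw [← tsum_mul_left, ← tsum_mul_left, ← tsum_mul_left,
    ← (h0.mul_left _).tsum_add (h1.mul_left _)]
  refine Summable.tsum_le_tsum ?_ (hh.mul_left _) ((h0.mul_left _).add (h1.mul_left _))
  intro m
  have ht := bes_term_upper hv hv1 hx m
  have hg := bes_Gamma_pos (show (-1:ℝ) < v by linarith) m
  have hm : (0:ℝ) < (m:ℝ) + 1 := by positivity
  have e2 : Real.Gamma ((m:ℝ) + 2) = ((m:ℝ)+1) * Nat.factorial m := by
    rw [show (m:ℝ) + 2 = (m:ℝ) + 1 + 1 by ring, Real.Gamma_add_one hm.ne',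
      Real.Gamma_nat_eq_factorial]
  have e3 : Real.Gamma ((m:ℝ) + 1 + 1) = ((m:ℝ)+1) * Nat.factorial m := by
    rw [Real.Gamma_add_one hm.ne', Real.Gamma_nat_eq_factorial]
  rw [e2] at ht
  rw [add_zero, Real.Gamma_nat_eq_factorial, e3]
  have p0 : (0:ℝ) < Nat.factorial m := by positivity
  have h5 : x ^ v / Real.Gamma ((m:ℝ)+1+v) ≤
      ((1-v) * ((m:ℝ) + 1 + v) + v * x) / (((m:ℝ)+1) * Nat.factorial m) := by
    rw [div_le_div_iff₀ hg (by positivity)]; exact ht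
  calc _ = ((x^2)^m / Nat.factorial m) * (x ^ v / Real.Gamma ((m:ℝ)+1+v)) := by
        field_simp
    _ ≤ ((x^2)^m / Nat.factorial m) *
        (((1-v) * ((m:ℝ) + 1 + v) + v * x) / (((m:ℝ)+1) * Nat.factorial m)) := by gcongr
    _ = _ := by field_simp; ring

lemma bes_lower {v x : ℝ} (hv : 0 < v) (hv1 : v < 1) (hx : 0 < x) :
      x ^ v * ((1+v) * besPhi 0 (x^2) - ((1+v) * v + v * x) * besPhi 1 (x^2))
      ≤ besPhi (-v) (x^2) := by
  have h0 := bes_summable (show (-1:ℝ) < 0 by norm_num) (x^2)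
  have h1 := bes_summable (show (-1:ℝ) < 1 by norm_num) (x^2)
  have hh := bes_summable (show (-1:ℝ) < -v by linarith) (x^2)
  unfold besPhi
  rw [← tsum_mul_left, ← tsum_mul_left,
    ← (h0.mul_left _).tsum_sub (h1.mul_left _), ← tsum_mul_left]
  refine Summable.tsum_le_tsum ?_ (((h0.mul_left _).sub (h1.mul_left _)).mul_left _) hh
  intro m
  have ht := bes_term_lower hv hv1 hx m
  have hg := bes_Gamma_pos (show (-1:ℝ) < -v by linarith) m
  have hm : (0:ℝ) < (m:ℝ) + 1 := by positivity
  have e2 : Real.Gamma ((m:ℝ) + 2) = ((m:ℝ)+1) * Nat.factorial m := by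
    rw [show (m:ℝ) + 2 = (m:ℝ) + 1 + 1 by ring, Real.Gamma_add_one hm.ne',
      Real.Gamma_nat_eq_factorial]
  have e3 : Real.Gamma ((m:ℝ) + 1 + 1) = ((m:ℝ)+1) * Nat.factorial m := by
    rw [Real.Gamma_add_one hm.ne', Real.Gamma_nat_eq_factorial]
  rw [e2] at ht
  rw [add_zero, Real.Gamma_nat_eq_factorial, e3]
  have p0 : (0:ℝ) < Nat.factorial m := by positivity
  have h5 : ((1+v) * ((m:ℝ) + 1 - v) - v * x) * x ^ v / (((m:ℝ)+1) * Nat.factorial m)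
      ≤ 1 / Real.Gamma ((m:ℝ)+1+-v) := by
    rw [div_le_div_iff₀ (by positivity) hg]; linarith
  calc _ = ((x^2)^m / Nat.factorial m) *
        (((1+v) * ((m:ℝ) + 1 - v) - v * x) * x ^ v / (((m:ℝ)+1) * Nat.factorial m)) := by
        field_simp; ring
    _ ≤ ((x^2)^m / Nat.factorial m) * (1 / Real.Gamma ((m:ℝ)+1+-v)) := by gcongr
    _ = _ := by field_simp

lemma bes_main {v y : ℝ} (hv : 0 < v) (hv1 : v < 1) (hy : 0 < y) :
    y ^ v * besPhi v y ≤ besPhi (-v) y := by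
  have hA := bes_pos (show -1 < -v by linarith) hy
  rw [← div_le_one hA]
  by_contra! hR
  set R := y ^ v * besPhi v y / besPhi (-v) y with hRdef
  have hR1 : 0 < R - 1 := by linarith
  set x : ℝ := max (Real.sqrt y) ((2 + 2*R)/(R-1)) with hxdef
  have hx : 0 < x := lt_of_lt_of_le (Real.sqrt_pos.2 hy) (le_max_left _ _)
  have hx2 : (2 + 2*R) ≤ x * (R-1) := by
    rw [← div_le_iff₀ hR1]; exact le_max_right _ _
  have hyx : y ≤ x^2 := by
    calc y = (Real.sqrt y)^2 := (Real.sq_sqrt hy.le).symm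
      _ ≤ x^2 := by gcongr; exact le_max_left _ _
  have hx2p : 0 < x^2 := by positivity
  have hm : R ≤ (x^2) ^ v * besPhi v (x^2) / besPhi (-v) (x^2) :=
    bes_ratio_mono hv hv1 hy hx2p hyx
  have hA' := bes_pos (show -1 < -v by linarith) hx2p
  rw [le_div_iff₀ hA'] at hm
  have exv : (x^2) ^ v = x ^ v * x ^ v := by rw [sq, Real.mul_rpow hx.le hx.le]
  have hxv : 0 < x ^ v := Real.rpow_pos_of_pos hx v
  have hU := bes_upper hv hv1 hx
  have hL := bes_lower hv hv1 hx
  have h01 := bes_zero_one hx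
  have hS0 := bes_pos (show (-1:ℝ) < 0 by norm_num) hx2p
  have hS1 := bes_pos (show (-1:ℝ) < 1 by norm_num) hx2p
  set S0 := besPhi 0 (x^2)
  set S1 := besPhi 1 (x^2)
  have hU' : x ^ v * besPhi v (x^2) ≤ S0 + S1 := by
    nlinarith [mul_le_mul_of_nonneg_left h01 hv.le, mul_pos hv hS1, mul_pos (mul_pos hv hv) hS1,
      mul_pos (sub_pos.2 hv1) hS1]
  have hL' : x ^ v * (S0 - 2 * S1) ≤ besPhi (-v) (x^2) := by
    refine le_trans ?_ hL
    apply mul_le_mul_of_nonneg_left _ hxv.le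
    have a := mul_le_mul_of_nonneg_left h01 hv.le
    have b : (1+v)*v ≤ 2 := by nlinarith
    have c := mul_le_mul_of_nonneg_right b hS1.le
    nlinarith
  have h6 : x ^ v * (R * (S0 - 2 * S1)) ≤ x ^ v * (S0 + S1) := by
    calc x ^ v * (R * (S0 - 2 * S1)) = R * (x ^ v * (S0 - 2*S1)) := by ring
      _ ≤ R * besPhi (-v) (x^2) := by
        apply mul_le_mul_of_nonneg_left hL'; linarith
      _ ≤ _ := hm
      _ = x ^ v * (x ^ v * besPhi v (x^2)) := by rw [exv]; ring
      _ ≤ _ := by gcongr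
  have h7 := le_of_mul_le_mul_left h6 hxv
  have h8 : (R-1) * S0 ≤ (2*R+1) * S1 := by linarith
  have h9 : (R-1) * (x * S1) ≤ (2*R+1) * S1 :=
    (mul_le_mul_of_nonneg_left h01 hR1.le).trans h8
  nlinarith [mul_le_mul_of_nonneg_right hx2 hS1.le]

theorem lemma1_theta_le_one (k : ℝ) (hk0 : 0 < k) (hk1 : k < 1) (u : ℝ) (hu : 0 ≤ u) :
    theta k u ≤ 1 := by
  rcases hu.eq_or_lt with rfl | hu
  · have hz : ∀ m : ℕ, (2*((m:ℝ)+1) - k + 1) ≠ 0 := by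
      intro m
      have : (0:ℝ) ≤ m := Nat.cast_nonneg m
      apply ne_of_gt; linarith
    have hz' : ∀ m : ℕ, (2*((m:ℝ)+1)) ≠ 0 := by
      intro m; positivity
    have : (1 - k) ≠ 0 := by linarith
    simp only [theta, zero_div, Real.zero_rpow (hz _), Real.zero_rpow (hz' _),
      Real.zero_rpow this]
    simp
  set v : ℝ := (1-k)/2 with hv
  set x : ℝ := u/2 with hxd
  have hx : 0 < x := by positivity
  have hv0 : 0 < v := by linarith
  have hv1 : v < 1 := by linarith
  have hx2p : 0 < x^2 := by positivity
  have hmain := bes_main hv0 hv1 hx2p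
  have s1 := bes_summable (show -1 < v by linarith) (x^2)
  have s2 := bes_summable (show -1 < -v by linarith) (x^2)
  have exv : (x^2) ^ v = x ^ (1-k) := by
    rw [← Real.rpow_natCast, ← Real.rpow_mul hx.le]; congr 1; rw [hv]; push_cast; ring
  have E1 : (2:ℝ)^(k-1) * u^(1-k) / Real.Gamma ((3-k)/2)
      + ∑' m : ℕ, x ^ (2*((m:ℝ)+1) - k + 1) /
          ((Nat.factorial (m+1)) * Real.Gamma (((m:ℝ)+1) + (3-k)/2))
      = (x^2) ^ v * besPhi v (x^2) := by
    unfold besPhi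
    rw [s1.tsum_eq_zero_add, mul_add, ← tsum_mul_left, exv]
    congr 1
    · rw [hxd, Real.div_rpow hu.le (by norm_num), show k - 1 = -(1-k) by ring,
        Real.rpow_neg (by norm_num), show ((0:ℕ):ℝ) + 1 + v = (3-k)/2 by rw [hv]; push_cast; ring]
      simp
      ring
    · apply tsum_congr
      intro m
      rw [show 2*((m:ℝ)+1) - k + 1 = (1-k) + ((2*(m+1):ℕ):ℝ) by push_cast; ring,
        Real.rpow_add hx, Real.rpow_natCast, pow_mul, mul_div_assoc,
        show ((m:ℝ)+1) + (3-k)/2 = ((m+1:ℕ):ℝ) + 1 + v by rw [hv]; push_cast; ring]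
  have E2 : ∑' m : ℕ, x ^ (2*((m:ℝ)+1)) /
          ((Nat.factorial (m+1)) * Real.Gamma (((m:ℝ)+1) + (k+1)/2))
      = besPhi (-v) (x^2) - (Real.Gamma ((k+1)/2))⁻¹ := by
    unfold besPhi
    rw [s2.tsum_eq_zero_add, show ((0:ℕ):ℝ) + 1 + -v = (k+1)/2 by rw [hv]; push_cast; ring]
    simp only [pow_zero, Nat.factorial_zero, Nat.cast_one, one_mul, one_div, add_sub_cancel_left]
    apply tsum_congr
    intro m
    rw [show 2*((m:ℝ)+1) = ((2*(m+1):ℕ):ℝ) by push_cast; ring,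
        Real.rpow_natCast, pow_mul,
        show ((m:ℝ)+1) + (k+1)/2 = ((m+1:ℕ):ℝ) + 1 + -v by rw [hv]; push_cast; ring]
  have hg : 0 < Real.Gamma ((k+1)/2) := Real.Gamma_pos_of_pos (by linarith)
  unfold theta
  rw [← hxd, E1, E2]
  calc _ ≤ Real.Gamma ((k+1)/2) * (Real.Gamma ((k+1)/2))⁻¹ := by
        apply mul_le_mul_of_nonneg_left _ hg.le; linarith
    _ = 1 := mul_inv_cancel₀ hg.ne'
end

section
/- Let 0 < κ < 1, w ≠ 0, μ > 0 and t > 0. Then lim_{ε→0⁺} ∫_ℝ e^{−2μtλ²}·f_{κ,w}(λ√ε) dλ = f_{κ,w}(0)·√(π/(2μt)). (The key dominated-convergence identity (20) in the proof of Theorem 3, established by splitting the integration domain at |λ√ε| = ε^{1/2−δ} with δ ∈ (0,1/2).) -/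
open Real MeasureTheory Filter

/-- The spectral density `f_{κ,w}` of the covariance `cos(wx)/(1+x²)^{κ/2}`. -/
noncomputable def specDen (k w lam : ℝ) : ℝ :=
  (c1 k / 2) * (besselK ((k-1)/2) |lam + w| * |lam + w| ^ ((k-1)/2)
    + besselK ((k-1)/2) |lam - w| * |lam - w| ^ ((k-1)/2))

lemma aux_inv_exp {ν r s : ℝ} (hs : 0 < s) :
    s ^ ((-1:ℝ) - 1) * ((s ^ (-1:ℝ)) ^ (-ν - 1) * Real.exp (-(r * s ^ (-1:ℝ))))
      = s ^ (ν - 1) * Real.exp (-r / s) := by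
  rw [← mul_assoc, ← Real.rpow_mul hs.le, ← Real.rpow_add hs, Real.rpow_neg_one]
  congr 2 <;> ring

lemma aux_integrable {ν r : ℝ} (hν : ν < 0) (hr : 0 < r) :
    IntegrableOn (fun s : ℝ => s ^ (ν - 1) * Real.exp (-r / s)) (Set.Ioi 0) := by
  have h := integrableOn_rpow_mul_exp_neg_mul_rpow (p := 1) (s := -ν - 1) (b := r)
    (by linarith) one_pos hr
  have h2 := (integrableOn_Ioi_comp_rpow_iff' _ (p := -1) (by norm_num)).2 h
  refine h2.congr_fun (fun s hs => ?_) measurableSet_Ioi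
  have := aux_inv_exp (ν := ν) (r := r) hs
  simpa [smul_eq_mul] using this

lemma aux_integral {ν r : ℝ} (hν : ν < 0) (hr : 0 < r) :
    ∫ s in Set.Ioi (0:ℝ), s ^ (ν - 1) * Real.exp (-r / s) = (1 / r) ^ (-ν) * Real.Gamma (-ν) := by
  rw [← Real.integral_rpow_mul_exp_neg_mul_Ioi (by linarith : 0 < -ν) hr,
    ← integral_comp_rpow_Ioi (fun t : ℝ => t ^ (-ν - 1) * Real.exp (-(r * t))) (p := -1)
      (by norm_num)]
  refine setIntegral_congr_fun measurableSet_Ioi (fun s hs => ?_)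
  have := aux_inv_exp (ν := ν) (r := r) hs
  simp only [smul_eq_mul, abs_neg, abs_one, one_mul]
  exact this.symm

lemma aux_pt {z r s : ℝ} (hz : 0 ≤ z) (hr : r ≤ z / 4) (hs : 0 < s) :
    -(z/2) * (s + 1/s) ≤ -r / s + -(z/2) := by
  have h1 : 2 ≤ s + 1 / s := by
    have : s + 1/s - 2 = (s-1)^2 / s := by field_simp; ring
    have : 0 ≤ (s-1)^2 / s := by positivity
    linarith
  have h2 : 0 < 1 / s := by positivity
  have h3 : r * (1/s) ≤ z / 4 * (1/s) := by gcongr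
  have h4 : -r / s = - (r * (1/s)) := by ring
  rw [h4]
  nlinarith [mul_nonneg hz hs.le, mul_nonneg hz (sub_nonneg.2 h1)]

lemma aux_meas (ν z : ℝ) : AEStronglyMeasurable
    (fun s : ℝ => s ^ (ν - 1) * Real.exp (-(z/2) * (s + 1/s))) (volume.restrict (Set.Ioi 0)) := by
  apply Measurable.aestronglyMeasurable
  fun_prop

lemma besselK_nonneg (ν z : ℝ) : 0 ≤ besselK ν z := by
  unfold besselK
  refine mul_nonneg (by norm_num) (setIntegral_nonneg measurableSet_Ioi fun s hs => ?_)
  have : (0:ℝ) < s := hs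
  positivity

lemma besselK_le {ν z : ℝ} (hν : ν < 0) (hz : 0 < z) :
    besselK ν z ≤ (1/2 * (1/4)^ν * Real.Gamma (-ν)) * (z ^ ν * Real.exp (-(z/2))) := by
  have hI := (aux_integrable hν (show 0 < z/4 by positivity)).mul_const (Real.exp (-(z/2)))
  have hpt : ∀ s ∈ Set.Ioi (0:ℝ), s ^ (ν - 1) * Real.exp (-(z/2) * (s + 1/s)) ≤
      s ^ (ν - 1) * Real.exp (-(z/4) / s) * Real.exp (-(z/2)) := by
    intro s hs
    have hs' : (0:ℝ) < s := hs
    rw [mul_assoc, ← Real.exp_add]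
    have := aux_pt hz.le le_rfl hs'
    gcongr
  have h : ∫ s in Set.Ioi (0:ℝ), s ^ (ν - 1) * Real.exp (-(z/2) * (s + 1/s)) ≤
      ∫ s in Set.Ioi (0:ℝ), s ^ (ν - 1) * Real.exp (-(z/4) / s) * Real.exp (-(z/2)) := by
    refine setIntegral_mono_on ?_ hI measurableSet_Ioi hpt
    refine Integrable.mono' hI (aux_meas ν z) ?_
    filter_upwards [ae_restrict_mem measurableSet_Ioi] with s hs
    have hs' : (0:ℝ) < s := hs
    rw [Real.norm_of_nonneg (by positivity)]
    exact hpt s hs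
  rw [integral_mul_const, aux_integral hν (show 0 < z/4 by positivity)] at h
  have e : (1 / (z/4)) ^ (-ν) = (1/4)^ν * z ^ ν := by
    rw [← Real.mul_rpow (by norm_num) hz.le, Real.rpow_neg (by positivity),
      ← Real.inv_rpow (by positivity)]
    congr 1; field_simp
  rw [e] at h
  unfold besselK
  linarith

lemma besselK_continuousAt {ν z : ℝ} (hν : ν < 0) (hz : 0 < z) :
    ContinuousAt (besselK ν) z := by
  unfold besselK
  refine continuousAt_const.mul ?_
  refine continuousAt_of_dominated (bound := fun s => s ^ (ν - 1) * Real.exp (-(z/8) / s))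
    (Eventually.of_forall fun y => aux_meas ν y) ?_
    (aux_integrable hν (by positivity)) (Eventually.of_forall fun s => by fun_prop)
  filter_upwards [lt_mem_nhds (show z/2 < z by linarith)] with y hy
  filter_upwards [ae_restrict_mem measurableSet_Ioi] with s hs
  have hs' : (0:ℝ) < s := hs
  rw [Real.norm_of_nonneg (by positivity)]
  have := aux_pt (z := y) (r := z/8) (by linarith) (by linarith) hs'
  gcongr
  linarith

/-- The basic even building block. -/
noncomputable def gB (ν x : ℝ) : ℝ := besselK ν |x| * |x| ^ ν

lemma gB_continuousAt {ν x : ℝ} (hν : ν < 0) (hx : x ≠ 0) : ContinuousAt (gB ν) x := by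
  have hx' : 0 < |x| := abs_pos.2 hx
  unfold gB
  refine ContinuousAt.mul ?_ ?_
  · exact ContinuousAt.comp (g := besselK ν) (besselK_continuousAt hν hx') continuous_abs.continuousAt
  · exact continuous_abs.continuousAt.rpow_const (Or.inl hx'.ne')

lemma gB_measurable (ν : ℝ) : Measurable (gB ν) := by
  have : Measurable (besselK ν) := by
    unfold besselK
    refine Measurable.const_mul ?_ _
    refine (StronglyMeasurable.integral_prod_right' (f := fun p : ℝ × ℝ => p.2 ^ (ν - 1) *
      Real.exp (-(p.1/2) * (p.2 + 1/p.2))) ?_).measurable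
    apply Measurable.stronglyMeasurable
    fun_prop
  unfold gB
  fun_prop

lemma gB_integrable {ν : ℝ} (hν : ν < 0) (hν' : -1/2 < ν) : Integrable (gB ν) := by
  have h := integrableOn_rpow_mul_exp_neg_mul_rpow (p := 1) (s := 2 * ν) (b := 1/2)
    (by linarith) one_pos (by norm_num)
  have h2 : Integrable (fun x : ℝ => (fun y : ℝ => y ^ (2*ν) * Real.exp (-(1/2) * y ^ (1:ℝ))) ‖x‖) := by
    refine (integrable_fun_norm_addHaar volume
      (f := fun y : ℝ => y ^ (2*ν) * Real.exp (-(1/2) * y ^ (1:ℝ)))).2 ?_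
    simpa using h
  refine Integrable.mono' (h2.const_mul (1/2 * (1/4)^ν * Real.Gamma (-ν)))
    (gB_measurable ν).aestronglyMeasurable (Eventually.of_forall fun x => ?_)
  have hG : 0 < Real.Gamma (-ν) := Real.Gamma_pos_of_pos (by linarith)
  have h0 : 0 ≤ gB ν x := mul_nonneg (besselK_nonneg _ _) (by positivity)
  rw [Real.norm_of_nonneg h0]
  rcases eq_or_ne x 0 with rfl | hx
  · simp [gB, Real.zero_rpow hν.ne]
    positivity
  · have hx' : 0 < |x| := abs_pos.2 hx
    calc gB ν x ≤ ((1/2 * (1/4)^ν * Real.Gamma (-ν)) * (|x| ^ ν * Real.exp (-(|x|/2)))) * |x| ^ ν := by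
          unfold gB
          gcongr
          exact besselK_le hν hx'
      _ = _ := by
          simp only [Real.norm_eq_abs, Real.rpow_one]
          rw [two_mul, Real.rpow_add hx', show -(1/2) * |x| = -(|x|/2) by ring]
          ring

theorem heat_dominated_convergence (k w μ t : ℝ)
    (hk0 : 0 < k) (hk1 : k < 1) (hw : w ≠ 0) (hμ : 0 < μ) (ht : 0 < t) :
    Filter.Tendsto
      (fun ε : ℝ => ∫ lam : ℝ, Real.exp (-2*μ*t*lam^2) * specDen k w (lam * Real.sqrt ε))
      (nhdsWithin 0 (Set.Ioi 0))
      (nhds (specDen k w 0 * Real.sqrt (π / (2*μ*t)))) := by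
  have hν : (k-1)/2 < 0 := by linarith
  have hν' : -1/2 < (k-1)/2 := by linarith
  have hG : specDen k w = fun x => (c1 k / 2) * (gB ((k-1)/2) (x + w) + gB ((k-1)/2) (x - w)) := rfl
  have hint : Integrable (specDen k w) := by
    rw [hG]
    exact (((gB_integrable hν hν').comp_add_right w).add
      ((gB_integrable hν hν').comp_sub_right w)).const_mul _
  have hcont : ContinuousAt (specDen k w) 0 := by
    rw [hG]
    refine continuousAt_const.mul (ContinuousAt.add ?_ ?_)
    · refine ContinuousAt.comp (g := gB ((k-1)/2)) (gB_continuousAt hν (by simpa using hw)) ?_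
      fun_prop
    · refine ContinuousAt.comp (g := gB ((k-1)/2)) (gB_continuousAt hν (by simpa using hw)) ?_
      fun_prop
  set a := 2*μ*t with ha
  have ha0 : 0 < a := by positivity
  set S := Real.sqrt (π / a) with hS
  have hS0 : 0 < S := Real.sqrt_pos.2 (by positivity)
  have key := tendsto_integral_comp_smul_smul_of_integrable (μ := volume)
    (φ := fun x : ℝ => S⁻¹ * Real.exp (-a * x^2)) (fun x => by positivity)
    (by rw [integral_const_mul, integral_gaussian, ← hS]; field_simp)
    (by
      have := (tendsto_rpow_abs_mul_exp_neg_mul_sq_cocompact ha0 1).const_mul S⁻¹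
      rw [← Metric.cobounded_eq_cocompact, mul_zero] at this
      refine this.congr fun x => ?_
      simp
      ring) hint hcont
  have hlim : Tendsto (fun ε : ℝ => (Real.sqrt ε)⁻¹) (nhdsWithin 0 (Set.Ioi 0)) atTop := by
    refine tendsto_inv_nhdsGT_zero.comp ?_
    refine tendsto_nhdsWithin_iff.2 ⟨?_, ?_⟩
    · have := (Real.continuous_sqrt.tendsto 0).mono_left (nhdsWithin_le_nhds (s := Set.Ioi 0))
      simpa using this
    · filter_upwards [self_mem_nhdsWithin] with ε hε
      exact Real.sqrt_pos.2 hε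
  have key2 := (key.comp hlim).mul_const S
  refine key2.congr' ?_
  filter_upwards [self_mem_nhdsWithin] with ε hε
  have hs : 0 < Real.sqrt ε := Real.sqrt_pos.2 hε
  set q := Real.sqrt ε with hq
  have hc := Measure.integral_comp_mul_right
    (fun x => (q⁻¹ * (S⁻¹ * Real.exp (-a * (q⁻¹ * x)^2))) * specDen k w x) q
  simp only [Function.comp, smul_eq_mul, Module.finrank_self, pow_one]
  have hc' : ∫ x, (q⁻¹ * (S⁻¹ * Real.exp (-a * (q⁻¹ * x)^2))) * specDen k w x =
      q * ∫ x, (q⁻¹ * (S⁻¹ * Real.exp (-a * (q⁻¹ * (x * q))^2))) * specDen k w (x * q) := by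
    rw [hc, abs_of_pos (by positivity), smul_eq_mul]
    field_simp
  rw [hc', ← integral_const_mul, ← integral_mul_const]
  congr 1
  ext x
  have e1 : q⁻¹ * (x * q) = x := by field_simp
  have e2 : -2*μ*t*x^2 = -a * x^2 := by rw [ha]; ring
  rw [e1, e2]
  field_simp
end

section
/- Let 0 < κ < 1, w ≠ 0, μ > 0, t > 0, t' > 0 and x, x' ∈ ℝ. Then f_{κ,w}(0)·∫_ℝ cos(λ(x−x'))·e^{−μ(t+t')λ²} dλ = (c₂(κ)·√π·(1−θ_κ(|w|))/(√μ·|w|^{1−κ})) · e^{−(x−x')²/(4μ(t+t'))}/√(t+t'). (The covariance formula (16) of Theorem 3 for the limit Gaussian field U₀(t,x), combining the Gaussian integral ∫_ℝ cos(λδ)e^{−aλ²}dλ = √(π/a)·e^{−δ²/(4a)} with the Lemma 1 identity f_{κ,w}(0) = c₂(κ)(1−θ_κ(|w|))/|w|^{1−κ}.) -/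
open Real MeasureTheory Filter

/-- The basic Bessel-type integral. -/
noncomputable def HH (c y : ℝ) : ℝ :=
  ∫ s in Set.Ioi (0:ℝ), s ^ (c - 1) * Real.exp (-s - y / s)

lemma HH_meas (c y : ℝ) : AEStronglyMeasurable (fun s : ℝ => s ^ (c - 1) * Real.exp (-s - y / s))
    (volume.restrict (Set.Ioi 0)) := by
  have : Measurable (fun s : ℝ => s ^ (c - 1) * Real.exp (-s - y / s)) := by fun_prop
  exact this.aestronglyMeasurable

lemma HH_integrable (c : ℝ) {y : ℝ} (hy : 0 < y) :
    IntegrableOn (fun s : ℝ => s ^ (c - 1) * Real.exp (-s - y / s)) (Set.Ioi 0) := by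
  obtain ⟨n, hn⟩ := exists_nat_gt (-c)
  have hc : 0 < c + n := by linarith
  have h1 := ((Real.GammaIntegral_convergent hc).const_mul ((Nat.factorial n : ℝ) / y ^ n))
  refine Integrable.mono' h1 (HH_meas c y) ?_
  refine (ae_restrict_iff' measurableSet_Ioi).2 (Eventually.of_forall fun s hs => ?_)
  have hs : 0 < s := hs
  rw [Real.norm_of_nonneg (by positivity)]
  have h2 := Real.pow_div_factorial_le_exp (y / s) (by positivity) n
  have h3 : Real.exp (-s - y / s) ≤ Real.exp (-s) * ((Nat.factorial n : ℝ) * (s ^ n / y ^ n)) := by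
    rw [sub_eq_add_neg, Real.exp_add, Real.exp_neg (y / s)]
    gcongr
    rw [inv_le_comm₀ (Real.exp_pos _) (by positivity)]
    refine le_trans (le_of_eq ?_) h2
    rw [div_pow]
    field_simp
  have h4 : s ^ (c + n - 1) = s ^ (c - 1) * s ^ n := by
    rw [← Real.rpow_natCast, ← Real.rpow_add hs]
    ring_nf
  rw [h4]
  calc _ ≤ s ^ (c - 1) * (Real.exp (-s) * ((Nat.factorial n : ℝ) * (s ^ n / y ^ n))) := by gcongr
    _ = _ := by ring

lemma HH_hasDerivAt (c : ℝ) {y : ℝ} (hy : 0 < y) : HasDerivAt (HH c) (-HH (c - 1) y) y := by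
  have key := hasDerivAt_integral_of_dominated_loc_of_deriv_le
    (μ := volume.restrict (Set.Ioi (0:ℝ))) (𝕜 := ℝ) (E := ℝ)
    (F := fun y s => s ^ (c - 1) * Real.exp (-s - y / s))
    (F' := fun y s => -(s ^ (c - 1 - 1) * Real.exp (-s - y / s)))
    (x₀ := y) (s := Set.Ioi (y / 2))
    (bound := fun s => s ^ (c - 1 - 1) * Real.exp (-s - (y / 2) / s))
    (Ioi_mem_nhds (by linarith)) (Eventually.of_forall fun x => HH_meas c x)
    (HH_integrable c hy) (HH_meas (c - 1) y).neg ?_ (HH_integrable (c - 1) (by linarith)) ?_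
  · have := key.2
    rw [integral_neg] at this
    exact this
  · refine (ae_restrict_iff' measurableSet_Ioi).2 (Eventually.of_forall fun s hs x hx => ?_)
    have hs : 0 < s := hs
    have hx : y / 2 < x := hx
    rw [norm_neg, Real.norm_of_nonneg (by positivity)]
    gcongr
  · refine (ae_restrict_iff' measurableSet_Ioi).2 (Eventually.of_forall fun s hs x hx => ?_)
    have hs : 0 < s := hs
    have h1 : HasDerivAt (fun x : ℝ => -s - x / s) (-(1 / s)) x := by
      simpa using ((hasDerivAt_id x).div_const s).const_sub (-s)
    refine (h1.exp.const_mul (s ^ (c - 1))).congr_deriv ?_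
    rw [Real.rpow_sub_one hs.ne' (c - 1)]
    field_simp

lemma HH_reflect (c : ℝ) {y : ℝ} (hy : 0 < y) : HH (-c) y = y ^ (-c) * HH c y := by
  have h1 := integral_comp_rpow_Ioi (fun s : ℝ => s ^ (-c - 1) * Real.exp (-s - y / s))
    (p := -1) (by norm_num)
  have h2 := integral_comp_mul_left_Ioi'
    (fun s : ℝ => (|(-1:ℝ)| * s ^ ((-1:ℝ) - 1)) •
      ((s ^ (-1:ℝ)) ^ (-c - 1) * Real.exp (-(s ^ (-1:ℝ)) - y / (s ^ (-1:ℝ))))) 0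
      (b := y⁻¹) (by positivity)
  rw [mul_zero, h1] at h2
  unfold HH
  rw [← h2, smul_eq_mul, ← integral_const_mul, ← integral_const_mul]
  refine setIntegral_congr_fun measurableSet_Ioi fun s hs => ?_
  have hs : 0 < s := hs
  simp only [abs_neg, abs_one, one_mul, smul_eq_mul]
  have e1 : (y⁻¹ * s) ^ (-1:ℝ) = y / s := by
    rw [Real.rpow_neg_one]; field_simp
  have e2 : (y⁻¹ * s) ^ ((-1:ℝ) - 1) = (y / s) ^ (2:ℝ) := by
    rw [← e1, ← Real.rpow_mul (by positivity)]; norm_num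
  rw [e1, e2, ← mul_assoc, ← mul_assoc, ← mul_assoc (y ^ (-c))]
  have e3 : -(y / s) - y / (y / s) = -s - y / s := by field_simp; ring
  rw [e3]
  congr 1
  rw [mul_assoc, ← Real.rpow_add (by positivity), Real.div_rpow hy.le hs.le, ← Real.rpow_neg_one y,
    div_eq_mul_inv, ← Real.rpow_neg hs.le, ← mul_assoc, ← Real.rpow_add hy]
  ring_nf

lemma HH_tendsto {c : ℝ} (hc : 0 < c) :
    Tendsto (HH c) (nhdsWithin 0 (Set.Ioi 0)) (nhds (Real.Gamma c)) := by
  rw [Real.Gamma_eq_integral hc]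
  refine tendsto_integral_filter_of_dominated_convergence
    (fun s => Real.exp (-s) * s ^ (c - 1)) (Eventually.of_forall fun x => HH_meas c x) ?_
    (Real.GammaIntegral_convergent hc) ?_
  · filter_upwards [self_mem_nhdsWithin] with y hy
    have hy : 0 < y := hy
    refine (ae_restrict_iff' measurableSet_Ioi).2 (Eventually.of_forall fun s hs => ?_)
    have hs : 0 < s := hs
    rw [Real.norm_of_nonneg (by positivity), mul_comm]
    gcongr
    have : 0 < y / s := by positivity
    linarith
  · refine (ae_restrict_iff' measurableSet_Ioi).2 (Eventually.of_forall fun s hs => ?_)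
    have hs : 0 < s := hs
    have : Continuous (fun y : ℝ => s ^ (c - 1) * Real.exp (-s - y / s)) := by fun_prop
    have h := (this.tendsto 0).mono_left (nhdsWithin_le_nhds (s := Set.Ioi 0))
    simpa [mul_comm] using h

/-- The Bessel-type power series. -/
noncomputable def SS (c y : ℝ) : ℝ :=
  ∑' m : ℕ, y ^ m / ((Nat.factorial m : ℝ) * Real.Gamma ((m:ℝ) + c))

lemma Gamma_lower {c : ℝ} (hc : 0 < c) : ∃ d : ℝ, 0 < d ∧ ∀ m : ℕ, d ≤ Real.Gamma ((m:ℝ) + c) := by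
  have hp := Real.Gamma_pos_of_pos hc
  have hp1 : 0 < Real.Gamma (1 + c) := Real.Gamma_pos_of_pos (by linarith)
  have h1 : ∀ m : ℕ, Real.Gamma (1 + c) ≤ Real.Gamma (((m + 1 : ℕ):ℝ) + c) := by
    intro m
    induction m with
    | zero => simp
    | succ m ih =>
      refine ih.trans ?_
      have hm : (0:ℝ) ≤ m := m.cast_nonneg
      have e : (((m + 1 + 1 : ℕ):ℝ) + c) = (((m + 1 : ℕ):ℝ) + c) + 1 := by push_cast; ring
      rw [e, Real.Gamma_add_one (by positivity)]
      have : (1:ℝ) ≤ ((m + 1 : ℕ):ℝ) + c := by push_cast; linarith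
      exact le_mul_of_one_le_left (Real.Gamma_pos_of_pos (by positivity)).le this
  refine ⟨min (Real.Gamma c) (Real.Gamma (1 + c)), lt_min hp hp1, fun m => ?_⟩
  cases m with
  | zero => simp
  | succ m => exact (min_le_right _ _).trans (h1 m)

lemma SS_bound {c : ℝ} (hc : 0 < c) : ∃ d : ℝ, 0 < d ∧ ∀ (m : ℕ) (y R : ℝ), |y| ≤ R →
    |y ^ m / ((Nat.factorial m : ℝ) * Real.Gamma ((m:ℝ) + c))| ≤ d * (R ^ m / (Nat.factorial m : ℝ)) := by
  obtain ⟨d, hd, h⟩ := Gamma_lower hc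
  refine ⟨d⁻¹, inv_pos.2 hd, fun m y R hR => ?_⟩
  have hG : 0 < Real.Gamma ((m:ℝ) + c) := hd.trans_le (h m)
  rw [abs_div, abs_pow, abs_of_pos (mul_pos (by positivity) hG)]
  have hR0 : 0 ≤ R := (abs_nonneg y).trans hR
  calc |y| ^ m / ((Nat.factorial m : ℝ) * Real.Gamma ((m:ℝ) + c))
      ≤ R ^ m / ((Nat.factorial m : ℝ) * d) := by
        gcongr
        exact h m
    _ = _ := by field_simp

lemma SS_summable {c : ℝ} (hc : 0 < c) (y : ℝ) :
    Summable (fun m : ℕ => y ^ m / ((Nat.factorial m : ℝ) * Real.Gamma ((m:ℝ) + c))) := by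
  obtain ⟨d, hd, h⟩ := SS_bound hc
  exact Summable.of_norm_bounded ((Real.summable_pow_div_factorial |y|).mul_left d)
    fun m => h m y |y| le_rfl

lemma SS_deriv_term (c y : ℝ) (m : ℕ) :
    ((m + 1 : ℕ):ℝ) * y ^ m / ((Nat.factorial (m + 1) : ℝ) * Real.Gamma (((m + 1 : ℕ):ℝ) + c)) =
    y ^ m / ((Nat.factorial m : ℝ) * Real.Gamma ((m:ℝ) + (c + 1))) := by
  have e : (((m + 1 : ℕ):ℝ) + c) = (m:ℝ) + (c + 1) := by push_cast; ring
  rw [e, Nat.factorial_succ, Nat.cast_mul, mul_assoc, mul_div_mul_left]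
  positivity

lemma SS_hasDerivAt {c : ℝ} (hc : 0 < c) (y : ℝ) : HasDerivAt (SS c) (SS (c + 1) y) y := by
  obtain ⟨d, hd, h⟩ := SS_bound (c := c + 1) (by linarith)
  set R := |y| + 1 with hR
  have key := hasDerivAt_tsum_of_isPreconnected (𝕜 := ℝ) (F := ℝ)
    (g := fun (m : ℕ) y => y ^ m / ((Nat.factorial m : ℝ) * Real.Gamma ((m:ℝ) + c)))
    (g' := fun (m : ℕ) y =>
      (m:ℝ) * y ^ (m - 1) / ((Nat.factorial m : ℝ) * Real.Gamma ((m:ℝ) + c)))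
    (t := Set.Ioo (-R) R) (y₀ := y) (y := y)
    (u := fun m => d * (R ^ (m - 1) / (Nat.factorial (m - 1) : ℝ)))
    ?_ isOpen_Ioo isPreconnected_Ioo ?_ ?_ ?_ (SS_summable hc y) ?_
  · refine key.congr_deriv ?_
    rw [Summable.tsum_eq_zero_add]
    · simp only [CharP.cast_eq_zero, zero_mul, zero_div, zero_add, Nat.add_sub_cancel]
      unfold SS
      exact tsum_congr fun m => SS_deriv_term c y m
    · rw [← summable_nat_add_iff 1]
      refine (SS_summable (c := c + 1) (by linarith) y).congr fun m => ?_
      exact (SS_deriv_term c y m).symm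
  · rw [← summable_nat_add_iff 1]
    exact (Real.summable_pow_div_factorial R).mul_left d
  · intro m x _
    exact (hasDerivAt_pow m x).div_const _
  · intro m x hx
    cases m with
    | zero => simp; positivity
    | succ m =>
      have := h m x R (abs_le.2 ⟨hx.1.le, hx.2.le⟩)
      rw [← SS_deriv_term] at this
      exact this
  · exact abs_lt.1 (by linarith)
  · exact abs_lt.1 (by linarith)

lemma SS_rec {c : ℝ} (hc : 0 < c) (y : ℝ) : c * SS (c + 1) y + y * SS (c + 2) y = SS c y := by
  have h1 : y * SS (c + 2) y = ∑' m : ℕ, (m:ℝ) * y ^ m / ((Nat.factorial m : ℝ) *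
      Real.Gamma ((m:ℝ) + (c + 1))) ∧ Summable (fun m : ℕ => (m:ℝ) * y ^ m / ((Nat.factorial m : ℝ) *
      Real.Gamma ((m:ℝ) + (c + 1)))) := by
    have e : ∀ m : ℕ, ((m + 1 : ℕ):ℝ) * y ^ (m + 1) / ((Nat.factorial (m + 1) : ℝ) *
      Real.Gamma (((m + 1 : ℕ):ℝ) + (c + 1))) =
      y * (y ^ m / ((Nat.factorial m : ℝ) * Real.Gamma ((m:ℝ) + (c + 2)))) := by
      intro m
      have := SS_deriv_term (c + 1) y m
      rw [show c + 2 = c + 1 + 1 by ring, ← this, pow_succ]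
      ring
    have hs : Summable (fun m : ℕ => (m:ℝ) * y ^ m / ((Nat.factorial m : ℝ) *
      Real.Gamma ((m:ℝ) + (c + 1)))) := by
      rw [← summable_nat_add_iff 1]
      exact ((SS_summable (c := c + 2) (by linarith) y).mul_left y).congr fun m => (e m).symm
    refine ⟨?_, hs⟩
    rw [hs.tsum_eq_zero_add]
    simp only [CharP.cast_eq_zero, zero_mul, zero_div, zero_add]
    unfold SS
    rw [← tsum_mul_left]
    exact tsum_congr fun m => (e m).symm
  rw [h1.1]
  unfold SS
  rw [← tsum_mul_left, ← ((SS_summable (c := c + 1) (by linarith) y).mul_left c).tsum_add h1.2]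
  refine tsum_congr fun m => ?_
  have hm : (0:ℝ) < (m:ℝ) + c := by positivity
  have hG := Real.Gamma_pos_of_pos hm
  rw [← add_assoc, Real.Gamma_add_one hm.ne']
  field_simp
  ring

lemma SS_zero (c : ℝ) : SS c 0 = 1 / Real.Gamma c := by
  unfold SS
  rw [tsum_eq_single 0]
  · simp
  · intro m hm
    simp [hm]

lemma SS_pow_hasDerivAt {c : ℝ} (hc : 0 < c) {y : ℝ} (hy : 0 < y) :
    HasDerivAt (fun y => y ^ c * SS (c + 1) y) (y ^ (c - 1) * SS c y) y := by
  have h := (Real.hasDerivAt_rpow_const (p := c) (Or.inl hy.ne')).mul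
    (SS_hasDerivAt (c := c + 1) (by linarith) y)
  refine h.congr_deriv ?_
  rw [← SS_rec hc, show c + 1 + 1 = c + 2 by ring]
  have : y ^ c = y ^ (c - 1) * y := by rw [Real.rpow_sub_one hy.ne']; field_simp
  rw [this]; ring

lemma SS_tendsto {c : ℝ} (hc : 0 < c) :
    Tendsto (SS c) (nhdsWithin 0 (Set.Ioi 0)) (nhds (1 / Real.Gamma c)) := by
  rw [← SS_zero]
  exact (SS_hasDerivAt hc 0).continuousAt.tendsto.mono_left nhdsWithin_le_nhds

lemma SS_pow_tendsto {c : ℝ} (hc : 0 < c) :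
    Tendsto (fun y => y ^ c * SS (c + 1) y) (nhdsWithin 0 (Set.Ioi 0)) (nhds 0) := by
  have h1 : Tendsto (fun y : ℝ => y ^ c) (nhdsWithin 0 (Set.Ioi 0)) (nhds 0) := by
    have := (Real.continuousAt_rpow_const 0 c (Or.inr hc.le)).tendsto
    rw [Real.zero_rpow hc.ne'] at this
    exact this.mono_left nhdsWithin_le_nhds
  simpa using h1.mul (SS_tendsto (c := c + 1) (by linarith))

lemma const_of_deriv {f : ℝ → ℝ} {L : ℝ} (hf : ∀ y, 0 < y → HasDerivAt f 0 y)
    (hL : Tendsto f (nhdsWithin 0 (Set.Ioi 0)) (nhds L)) {y : ℝ} (hy : 0 < y) : f y = L := by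
  have h : ∀ x ∈ Set.Ioi (0:ℝ), f y = f x := fun x hx =>
    isOpen_Ioi.is_const_of_deriv_eq_zero (isPreconnected_Ioi)
      (fun z hz => (hf z hz).differentiableAt.differentiableWithinAt)
      (fun z hz => (hf z hz).deriv) hy hx
  refine tendsto_nhds_unique ?_ hL
  refine tendsto_const_nhds.congr' ?_
  filter_upwards [self_mem_nhdsWithin] with x hx using h x hx

lemma HH_hasDerivAt' (c : ℝ) {y : ℝ} (hy : 0 < y) :
    HasDerivAt (HH c) (-(y ^ (c - 1) * HH (1 - c) y)) y := by
  have := HH_hasDerivAt c hy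
  rwa [show c - 1 = -(1 - c) by ring, HH_reflect _ hy, show -(1 - c) = c - 1 by ring] at this

lemma wronsk_SS {a : ℝ} (h0 : 0 < a) (h1 : a < 1) {y : ℝ} (hy : 0 < y) :
    SS (1 - a) y * SS a y - (y ^ a * SS (a + 1) y) * (y ^ (1 - a) * SS (1 - a + 1) y)
      = 1 / (Real.Gamma a * Real.Gamma (1 - a)) := by
  have h1' : 0 < 1 - a := by linarith
  refine const_of_deriv (f := fun y => SS (1 - a) y * SS a y -
    (y ^ a * SS (a + 1) y) * (y ^ (1 - a) * SS (1 - a + 1) y)) (fun y hy => ?_) ?_ hy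
  · have h := ((SS_hasDerivAt h1' y).mul (SS_hasDerivAt h0 y)).sub
      ((SS_pow_hasDerivAt h0 hy).mul (SS_pow_hasDerivAt h1' hy))
    refine h.congr_deriv ?_
    have e1 : y ^ (a - 1) * y ^ (1 - a) = 1 := by rw [← Real.rpow_add hy]; norm_num
    have e2 : y ^ a * y ^ (1 - a - 1) = 1 := by rw [← Real.rpow_add hy]; norm_num
    linear_combination (-SS a y * SS (1 - a + 1) y) * e1 - (SS (1 - a) y * SS (a + 1) y) * e2
  · have := ((SS_tendsto h1').mul (SS_tendsto h0)).sub ((SS_pow_tendsto h0).mul (SS_pow_tendsto h1'))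
    convert this using 2
    rw [mul_zero, sub_zero, div_mul_div_comm, one_mul, mul_comm (Real.Gamma a)]

lemma wronsk_HH {a : ℝ} (h0 : 0 < a) (h1 : a < 1) {y : ℝ} (hy : 0 < y) :
    HH a y * SS a y + HH (1 - a) y * (y ^ a * SS (a + 1) y) = 1 := by
  have h1' : 0 < 1 - a := by linarith
  refine const_of_deriv (f := fun y => HH a y * SS a y + HH (1 - a) y * (y ^ a * SS (a + 1) y))
    (fun y hy => ?_) ?_ hy
  · have h := ((HH_hasDerivAt' a hy).mul (SS_hasDerivAt h0 y)).add
      ((HH_hasDerivAt' (1 - a) hy).mul (SS_pow_hasDerivAt h0 hy))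
    refine h.congr_deriv ?_
    have e2 : y ^ a * y ^ (1 - a - 1) = 1 := by rw [← Real.rpow_add hy]; norm_num
    rw [show 1 - (1 - a) = a by ring]
    linear_combination (-HH a y * SS (a + 1) y) * e2
  · have := ((HH_tendsto h0).mul (SS_tendsto h0)).add ((HH_tendsto h1').mul (SS_pow_tendsto h0))
    convert this using 2
    have := Real.Gamma_pos_of_pos h0
    field_simp
    simp

lemma HH_eq {a : ℝ} (h0 : 0 < a) (h1 : a < 1) {y : ℝ} (hy : 0 < y) :
    HH a y = Real.Gamma a * Real.Gamma (1 - a) * (SS (1 - a) y - y ^ a * SS (a + 1) y) := by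
  have h1' : 0 < 1 - a := by linarith
  have w0 := wronsk_SS h0 h1 hy
  have w1 := wronsk_HH h0 h1 hy
  have w2 := wronsk_HH h1' (by linarith) hy
  rw [show 1 - (1 - a) = a by ring] at w2
  have g0 := Real.Gamma_pos_of_pos h0
  have g1 := Real.Gamma_pos_of_pos h1'
  have : HH a y * (1 / (Real.Gamma a * Real.Gamma (1 - a))) =
      SS (1 - a) y - y ^ a * SS (a + 1) y := by
    linear_combination (-HH a y) * w0 + SS (1 - a) y * w1 - (y ^ a * SS (a + 1) y) * w2
  rw [← this]
  field_simp

lemma besselK_eq (a : ℝ) {z : ℝ} (hz : 0 < z) :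
    besselK (-a) z = (1 / 2) * ((z / 2) ^ (-a) * HH a (z ^ 2 / 4)) := by
  have h2 := integral_comp_mul_left_Ioi'
    (fun s : ℝ => s ^ (-a - 1) * Real.exp (-(z/2) * (s + 1/s))) 0 (b := 2 / z) (by positivity)
  rw [mul_zero] at h2
  have hr := HH_reflect (-a) (y := z ^ 2 / 4) (by positivity)
  have h3 : HH a (z ^ 2 / 4) = (z / 2) ^ (2 * a) * HH (-a) (z ^ 2 / 4) := by
    rw [neg_neg] at hr
    rw [hr, show z ^ 2 / 4 = (z / 2) ^ (2:ℝ) by rw [Real.rpow_two]; ring,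
      ← Real.rpow_mul (by positivity)]
  unfold besselK
  rw [h3, ← h2, ← mul_assoc ((z / 2) ^ (-a)), ← Real.rpow_add (by positivity)]
  congr 1
  unfold HH
  rw [smul_eq_mul, ← integral_const_mul, ← integral_const_mul]
  refine setIntegral_congr_fun measurableSet_Ioi fun s hs => ?_
  have hs : 0 < s := hs
  have e1 : -(z / 2) * (2 / z * s + 1 / (2 / z * s)) = -s - z ^ 2 / 4 / s := by
    field_simp; ring
  have e2 : (2 / z) = (z / 2) ^ (-1:ℝ) := by rw [Real.rpow_neg_one, inv_div]
  rw [e1, Real.mul_rpow (by positivity) hs.le, ← mul_assoc, ← mul_assoc, ← mul_assoc]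
  congr 2
  rw [e2, ← Real.rpow_mul (by positivity), ← Real.rpow_add (by positivity)]
  congr 1
  ring

lemma gauss_cos {b : ℝ} (hb : 0 < b) (d : ℝ) :
    ∫ l : ℝ, Real.cos (l * d) * Real.exp (-b * l ^ 2) =
      Real.sqrt (π / b) * Real.exp (-d ^ 2 / (4 * b)) := by
  have h := fourierIntegral_gaussian (b := (b:ℂ)) (by simpa using hb) (d:ℂ)
  have hi : Integrable (fun x : ℝ => Complex.exp (Complex.I * d * x) * Complex.exp (-(b:ℂ) * (x:ℂ) ^ 2)) := by
    have := GaussianFourier.integrable_cexp_neg_mul_sq_add_real_mul_I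
      (b := (b:ℂ)) (by simpa using hb) 0
    have h2 := integrable_cexp_neg_mul_sq (b := (b:ℂ)) (by simpa using hb)
    refine h2.bdd_mul (c := 1) ?_ ?_
    · exact (by fun_prop : Continuous fun x : ℝ => Complex.exp (Complex.I * d * x)).aestronglyMeasurable
    · refine Eventually.of_forall fun x => ?_
      rw [show Complex.I * d * x = ((d * x : ℝ):ℂ) * Complex.I by push_cast; ring,
        Complex.norm_exp_ofReal_mul_I]
  have h3 := congrArg Complex.re h
  have h4 := integral_re (𝕜 := ℂ) hi
  simp only [RCLike.re_to_complex] at h4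
  rw [← h4] at h3
  have e1 : ∀ x : ℝ, (Complex.exp (Complex.I * d * x) * Complex.exp (-(b:ℂ) * (x:ℂ) ^ 2)).re
      = Real.cos (x * d) * Real.exp (-b * x ^ 2) := by
    intro x
    rw [show Complex.I * d * x = ((x * d : ℝ):ℂ) * Complex.I by push_cast; ring,
      show -(b:ℂ) * (x:ℂ) ^ 2 = ((-b * x ^ 2 : ℝ):ℂ) by push_cast; ring, ← Complex.ofReal_exp,
      Complex.re_mul_ofReal, Complex.exp_ofReal_mul_I_re]
  simp only [e1] at h3
  rw [h3]
  have e2 : ((π:ℂ) / b) ^ (1 / 2 : ℂ) = ((Real.sqrt (π / b) : ℝ) : ℂ) := by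
    rw [Real.sqrt_eq_rpow, Complex.ofReal_cpow (by positivity)]
    push_cast
    rfl
  rw [e2, show -(d:ℂ) ^ 2 / (4 * b) = ((-d ^ 2 / (4 * b) : ℝ):ℂ) by push_cast; ring,
    ← Complex.ofReal_exp, ← Complex.ofReal_mul, Complex.ofReal_re]

lemma theta_eq {k u : ℝ} (hk0 : 0 < k) (hk1 : k < 1) (hu : 0 < u) :
    1 - theta k u = Real.Gamma ((k + 1) / 2) *
      (SS ((k + 1) / 2) (u ^ 2 / 4) - (u ^ 2 / 4) ^ ((1 - k) / 2) * SS ((3 - k) / 2) (u ^ 2 / 4)) := by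
  have hG := Real.Gamma_pos_of_pos (show 0 < (k + 1) / 2 by linarith)
  have hu2 : 0 < u / 2 := by positivity
  have e0 : u ^ 2 / 4 = (u / 2) ^ 2 := by ring
  have e1 : ∀ c : ℝ, 0 < c → SS c (u ^ 2 / 4) = 1 / Real.Gamma c +
      ∑' m : ℕ, (u / 2) ^ (2 * ((m:ℝ) + 1)) /
          ((Nat.factorial (m + 1)) * Real.Gamma (((m:ℝ) + 1) + c)) := by
    intro c hc
    unfold SS
    rw [(SS_summable hc _).tsum_eq_zero_add]
    congr 1
    · simp
    · refine tsum_congr fun m => ?_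
      rw [e0, ← pow_mul, ← Real.rpow_natCast]
      push_cast
      rfl
  have e2 : (u ^ 2 / 4) ^ ((1 - k) / 2) = (u / 2) ^ (1 - k) := by
    rw [e0, ← Real.rpow_two, ← Real.rpow_mul hu2.le]
    congr 1
    ring
  rw [e1 _ (by linarith), e1 _ (by linarith), e2, mul_add, ← tsum_mul_left]
  unfold theta
  have e3 : ∀ m : ℕ, (u / 2) ^ (1 - k) * ((u / 2) ^ (2 * ((m:ℝ) + 1)) /
          ((Nat.factorial (m + 1)) * Real.Gamma (((m:ℝ) + 1) + (3 - k) / 2))) =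
      (u/2) ^ (2*((m:ℝ)+1) - k + 1) /
          ((Nat.factorial (m+1)) * Real.Gamma (((m:ℝ)+1) + (3-k)/2)) := by
    intro m
    rw [← mul_div_assoc, ← Real.rpow_add hu2]
    congr 2
    ring
  have e4 : (u / 2) ^ (1 - k) = (2:ℝ) ^ (k - 1) * u ^ (1 - k) := by
    rw [Real.div_rpow hu.le (by norm_num), show k - 1 = -(1 - k) by ring,
      Real.rpow_neg (by norm_num)]
    ring
  simp only [e3]
  rw [e4]
  field_simp
  ring

lemma specDen_eq {k w : ℝ} (hk0 : 0 < k) (hk1 : k < 1) (hw : w ≠ 0) :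
    specDen k w 0 = c2 k * (1 - theta k |w|) / |w| ^ (1 - k) := by
  have hu : 0 < |w| := abs_pos.2 hw
  set u := |w| with hud
  have hsp : specDen k w 0 = c1 k * (besselK ((k - 1) / 2) u * u ^ ((k - 1) / 2)) := by
    unfold specDen
    rw [zero_add, zero_sub, abs_neg, ← hud]
    ring
  rw [hsp, theta_eq hk0 hk1 hu, show (k - 1) / 2 = -((1 - k) / 2) by ring, besselK_eq _ hu,
    HH_eq (a := (1 - k) / 2) (by linarith) (by linarith) (by positivity),
    show 1 - (1 - k) / 2 = (k + 1) / 2 by ring, show (1 - k) / 2 + 1 = (3 - k) / 2 by ring]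
  set D := SS ((k + 1) / 2) (u ^ 2 / 4) - (u ^ 2 / 4) ^ ((1 - k) / 2) * SS ((3 - k) / 2) (u ^ 2 / 4)
  have hrefl := Real.Gamma_mul_Gamma_one_sub ((1 - k) / 2)
  rw [show 1 - (1 - k) / 2 = (k + 1) / 2 by ring,
    show π * ((1 - k) / 2) = π / 2 - k * π / 2 by ring, Real.sin_pi_div_two_sub] at hrefl
  have hdup := Real.Gamma_mul_Gamma_add_half (k / 2)
  rw [show k / 2 + 1 / 2 = (k + 1) / 2 by ring, show 2 * (k / 2) = k by ring] at hdup
  have hcos : 0 < Real.cos (k * π / 2) := by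
    apply Real.cos_pos_of_mem_Ioo
    constructor <;> nlinarith [Real.pi_pos]
  have g1 := Real.Gamma_pos_of_pos (show 0 < k / 2 by linarith)
  have g2 := Real.Gamma_pos_of_pos hk0
  rw [hrefl]
  have p1 : (u / 2) ^ (-((1 - k) / 2)) = u ^ (-((1 - k) / 2)) * 2 ^ ((1 - k) / 2) := by
    rw [Real.div_rpow hu.le (by norm_num), Real.rpow_neg (by norm_num : (0:ℝ) ≤ 2)]
    field_simp
  have p2 : u ^ (-((1 - k) / 2)) * u ^ (-((1 - k) / 2)) = (u ^ (1 - k))⁻¹ := by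
    rw [← Real.rpow_add hu, ← Real.rpow_neg hu.le]
    congr 1; ring
  have p3 : (2:ℝ) ^ ((1 - k) / 2) * 2 ^ ((1 - k) / 2) = 2 ^ (1 - k) := by
    rw [← Real.rpow_add (by norm_num)]
    congr 1; ring
  have hpi : Real.sqrt π * Real.sqrt π = π := Real.mul_self_sqrt Real.pi_pos.le
  have hsp := Real.sqrt_pos.2 Real.pi_pos
  have hG : Real.Gamma ((k + 1) / 2) = Real.Gamma k * 2 ^ (1 - k) * Real.sqrt π / Real.Gamma (k / 2) := by
    rw [← hdup]; field_simp
  rw [hG, p1]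
  unfold c1 c2
  calc _ = ((2:ℝ) ^ ((1 - k) / 2) * 2 ^ ((1 - k) / 2)) *
        (u ^ (-((1 - k) / 2)) * u ^ (-((1 - k) / 2))) *
        (π / (Real.sqrt π * Real.Gamma (k / 2) * 2 * Real.cos (k * π / 2))) * D := by
        field_simp
    _ = _ := by
        rw [p2, p3]
        nth_rewrite 1 [← hpi]
        field_simp

theorem limit_field_covariance (k w μ t t' x x' : ℝ)
    (hk0 : 0 < k) (hk1 : k < 1) (hw : w ≠ 0) (hμ : 0 < μ) (ht : 0 < t) (ht' : 0 < t') :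
    specDen k w 0 * ∫ lam : ℝ, Real.cos (lam * (x - x')) * Real.exp (-μ * (t + t') * lam^2)
      = c2 k * Real.sqrt π * (1 - theta k |w|) / (Real.sqrt μ * |w| ^ (1-k))
          * (Real.exp (-(x - x')^2 / (4 * μ * (t + t'))) / Real.sqrt (t + t')) := by
  have hb : 0 < μ * (t + t') := by positivity
  have h := gauss_cos hb (x - x')
  simp only [neg_mul] at h ⊢
  rw [h, specDen_eq hk0 hk1 hw, Real.sqrt_div' _ hb.le, Real.sqrt_mul hμ.le, ← mul_assoc 4]
  ring
end

section
/- Let 0 < κ < 1, w ≠ 0, 0 < β < 1, α > 1, γ ≥ 0, μ > 0 and t > 0. Assume the known Mittag-Leffler facts: 1/(1+Γ(1−β)u) ≤ E_β(−u) ≤ 1/(1+u/Γ(1+β)) for u ≥ 0, and that u ↦ E_β(−u) is nonincreasing on [0,∞) (complete monotonicity). Then lim_{ε→0⁺} ∫_ℝ [E_β(−μ|λ|^α(1+λ²ε^{2β/α})^{γ/2} t^β)]² / E_β(−μ t^β|λ|^α) · f_{κ,w}(λ ε^{β/α}) dλ = f_{κ,w}(0)·∫_ℝ E_β(−μ t^β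 |λ|^α) dλ. (The dominated-convergence identity (23) at the heart of the proof of Theorem 4 for the fractional Riesz-Bessel equation.) -/
open Real MeasureTheory Filter

/-- The Mittag-Leffler function `E_β(z) = Σ_{k≥0} z^k / Γ(βk+1)` (real argument). -/
noncomputable def mittagLeffler (b z : ℝ) : ℝ := ∑' k : ℕ, z ^ k / Real.Gamma (b * k + 1)

/-- Gaussian-mixture form of `|z|^ν K_ν(|z|)`. -/
noncomputable def auxH (ν z : ℝ) : ℝ :=
  (1/2) * ∫ r in Set.Ioi (0:ℝ), r ^ (ν - 1) * Real.exp (-(r/2) - z^2/(2*r))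

lemma besselK_eq_auxH (ν z : ℝ) (hz : 0 < z) : besselK ν z * z ^ ν = auxH ν z := by
  have h := integral_comp_mul_left_Ioi
    (fun r : ℝ => r ^ (ν - 1) * Real.exp (-(r/2) - z^2/(2*r))) 0 hz
  rw [mul_zero] at h
  have h2 : ∫ s in Set.Ioi (0:ℝ), (fun r : ℝ => r ^ (ν - 1) * Real.exp (-(r/2) - z^2/(2*r))) (z * s)
      = z ^ (ν - 1) * ∫ s in Set.Ioi (0:ℝ), s ^ (ν - 1) * Real.exp (-(z/2) * (s + 1/s)) := by
    rw [← integral_const_mul]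
    refine setIntegral_congr_fun measurableSet_Ioi ?_
    intro s hs
    have hs : 0 < s := hs
    simp only
    rw [Real.mul_rpow hz.le hs.le, mul_assoc]
    congr 3
    field_simp
    ring
  rw [h2] at h
  unfold besselK auxH
  have h3 : z ^ ν = z * z ^ (ν - 1) := by
    rw [Real.rpow_sub_one hz.ne']; field_simp
  rw [h3]
  have : ∫ r in Set.Ioi (0:ℝ), r ^ (ν - 1) * Real.exp (-(r/2) - z^2/(2*r)) = z * (z ^ (ν - 1) * ∫ s in Set.Ioi (0:ℝ), s ^ (ν - 1) * Real.exp (-(z/2) * (s + 1/s))) := by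
    rw [h, smul_eq_mul, mul_inv_cancel_left₀ hz.ne']
  rw [this]; ring

lemma integrableOn_base (s : ℝ) (hs : -1 < s) :
    IntegrableOn (fun r : ℝ => r ^ s * Real.exp (-(r/2))) (Set.Ioi 0) := by
  have := integrableOn_rpow_mul_exp_neg_mul_rpow (p := 1) (s := s) (b := 1/2) hs one_pos (by norm_num)
  refine this.congr_fun ?_ measurableSet_Ioi
  intro r hr
  simp only [Real.rpow_one]
  congr 2; ring

lemma auxH_continuousAt (ν : ℝ) (hν : -1 < ν) (z₀ : ℝ) (hz₀ : z₀ ≠ 0) :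
    ContinuousAt (auxH ν) z₀ := by
  unfold auxH
  refine ContinuousAt.mul continuousAt_const ?_
  have ha : 0 < |z₀|/2 := by positivity
  have hev : ∀ᶠ z in nhds z₀, |z₀|/2 < |z| := by
    have : ContinuousAt (fun z : ℝ => |z|) z₀ := continuous_abs.continuousAt
    exact this.eventually (lt_mem_nhds (by linarith))
  refine continuousAt_of_dominated (bound := fun r => (2/(|z₀|/2)^2) * (r ^ ν * Real.exp (-(r/2)))) ?_ ?_ ?_ ?_
  · refine Eventually.of_forall fun z => ?_
    exact (by fun_prop : Measurable fun r : ℝ => r ^ (ν - 1) * Real.exp (-(r/2) - z^2/(2*r))).aestronglyMeasurable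
  · filter_upwards [hev] with z hz
    filter_upwards [ae_restrict_mem measurableSet_Ioi] with r hr
    have hr : 0 < r := hr
    rw [Real.norm_of_nonneg (by positivity), sub_eq_add_neg (-(r/2)), Real.exp_add]
    have hz2 : (|z₀|/2)^2 ≤ z^2 := by
      rw [← sq_abs z]; gcongr
    have hz0 : 0 < z^2 := lt_of_lt_of_le (by positivity) hz2
    have hy : 0 < z^2/(2*r) := by positivity
    have h1 : Real.exp (-(z^2/(2*r))) ≤ 2*r/(|z₀|/2)^2 := by
      rw [Real.exp_neg]
      calc (Real.exp (z^2/(2*r)))⁻¹ ≤ (z^2/(2*r))⁻¹ := by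
            apply inv_anti₀ hy
            linarith [Real.add_one_le_exp (z^2/(2*r))]
        _ = 2*r/z^2 := by rw [inv_div]
        _ ≤ _ := by gcongr
    have h3 : r ^ ν = r * r ^ (ν - 1) := by
      rw [Real.rpow_sub_one hr.ne']; field_simp
    rw [h3]
    calc _ ≤ r ^ (ν - 1) * (Real.exp (-(r/2)) * (2*r/(|z₀|/2)^2)) := by gcongr
      _ = _ := by ring
  · exact (integrableOn_base ν hν).const_mul _
  · refine Eventually.of_forall fun r => ?_
    fun_prop

lemma auxH_integrable (ν : ℝ) (hν : -1/2 < ν) : Integrable (auxH ν) := by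
  unfold auxH
  refine Integrable.const_mul ?_ _
  have hm : Measurable (fun p : ℝ × ℝ => p.1 ^ (ν - 1) * Real.exp (-(p.1/2) - p.2^2/(2*p.1))) := by
    fun_prop
  have key : Integrable (fun p : ℝ × ℝ => p.1 ^ (ν - 1) * Real.exp (-(p.1/2) - p.2^2/(2*p.1)))
      ((volume.restrict (Set.Ioi 0)).prod volume) := by
    rw [integrable_prod_iff hm.aestronglyMeasurable]
    have e : ∀ r z : ℝ, r ^ (ν - 1) * Real.exp (-(r/2) - z^2/(2*r))
        = r ^ (ν - 1) * Real.exp (-(r/2)) * Real.exp (-(1/(2*r)) * z^2) := by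
      intro r z
      rw [mul_assoc, ← Real.exp_add]; congr 2; ring
    constructor
    · filter_upwards [ae_restrict_mem measurableSet_Ioi] with r hr
      have hr : 0 < r := hr
      simp only [e]
      exact (integrable_exp_neg_mul_sq (by positivity)).const_mul _
    · refine ((integrableOn_base (ν - 1/2) (by linarith)).const_mul (Real.sqrt (2*π))).congr ?_
      filter_upwards [ae_restrict_mem measurableSet_Ioi] with r hr
      have hr : 0 < r := hr
      have : ∀ z : ℝ, ‖r ^ (ν - 1) * Real.exp (-(r/2) - z^2/(2*r))‖
        = r ^ (ν - 1) * Real.exp (-(r/2)) * Real.exp (-(1/(2*r)) * z^2) := by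
        intro z
        rw [Real.norm_of_nonneg (by positivity), e]
      simp only [this]
      rw [integral_const_mul, integral_gaussian]
      have h1 : π / (1/(2*r)) = (2*π) * r := by field_simp
      rw [h1, Real.sqrt_mul (by positivity : 0 ≤ 2*π) r, Real.sqrt_eq_rpow r]
      have h2 : r ^ (ν - 1/2) = r ^ (ν - 1) * r ^ (1/2:ℝ) := by
        rw [← Real.rpow_add hr]; congr 1; ring
      rw [h2]; ring
  exact key.integral_prod_right

lemma specDen_eq_s15 (k w x : ℝ) (h1 : x ≠ w) (h2 : x ≠ -w) :
    specDen k w x = (c1 k / 2) * (auxH ((k-1)/2) (x + w) + auxH ((k-1)/2) (x - w)) := by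
  have habs : ∀ ν z, auxH ν |z| = auxH ν z := by
    intro ν z; unfold auxH; simp only [sq_abs]
  unfold specDen
  rw [besselK_eq_auxH _ _ (abs_pos.2 fun h => h2 (by linarith)),
    besselK_eq_auxH _ _ (abs_pos.2 fun h => h1 (by linarith)), habs, habs]

lemma specDen_integrable (k w : ℝ) (hk0 : 0 < k) : Integrable (specDen k w) := by
  have hH := auxH_integrable ((k-1)/2) (by linarith)
  have := ((hH.comp_add_right w).add (hH.comp_sub_right w)).const_mul (c1 k / 2)
  refine this.congr ?_
  have e1 : ∀ᵐ x : ℝ, x ≠ w := by simp [ae_iff, measure_singleton]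
  have e2 : ∀ᵐ x : ℝ, x ≠ -w := by simp [ae_iff, measure_singleton]
  filter_upwards [e1, e2] with x h1 h2
  rw [specDen_eq_s15 k w x h1 h2]; rfl

lemma specDen_continuousAt (k w : ℝ) (hk0 : 0 < k) (hw : w ≠ 0) :
    ContinuousAt (specDen k w) 0 := by
  have c : ContinuousAt (fun x => (c1 k / 2) * (auxH ((k-1)/2) (x + w) + auxH ((k-1)/2) (x - w))) 0 := by
    refine continuousAt_const.mul (ContinuousAt.add ?_ ?_)
    · exact ContinuousAt.comp (f := fun x : ℝ => x + w)
        (auxH_continuousAt _ (by linarith) (0 + w) (by simpa using hw)) (by fun_prop)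
    · exact ContinuousAt.comp (f := fun x : ℝ => x - w)
        (auxH_continuousAt _ (by linarith) (0 - w) (by simpa using hw)) (by fun_prop)
  refine c.congr ?_
  filter_upwards [isOpen_ne.mem_nhds hw.symm, isOpen_ne.mem_nhds (neg_ne_zero.2 hw).symm] with x h1 h2
  exact (specDen_eq_s15 k w x h1 h2).symm

lemma abstract_limit (f : ℝ → ℝ) (hf : Integrable f) (hc : ContinuousAt f 0)
    (g : ℝ → ℝ) (C α : ℝ) (hα : 1 < α) (hC : 0 ≤ C)
    (hg : ∀ x, g x ≤ C * (1 + |x|) ^ (-α))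
    (G : ℝ → ℝ → ℝ) (hGm : ∀ ε, 0 < ε → Measurable (G ε))
    (hG : ∀ ε, 0 < ε → ∀ x, |G ε x| ≤ g x)
    (hlim : ∀ᵐ x : ℝ, Tendsto (fun ε => G ε x) (nhdsWithin 0 (Set.Ioi 0)) (nhds (g x)))
    (d : ℝ → ℝ) (hd : ∀ ε, 0 < ε → 0 < d ε)
    (hd0 : Tendsto d (nhdsWithin 0 (Set.Ioi 0)) (nhds 0)) :
    Tendsto (fun ε => ∫ x, G ε x * f (x * d ε)) (nhdsWithin 0 (Set.Ioi 0))
      (nhds (f 0 * ∫ x, g x)) := by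
  have hbdInt : Integrable (fun x : ℝ => C * (1 + |x|) ^ (-α)) := by
    have := integrable_one_add_norm (E := ℝ) (μ := volume) (r := α) (by simpa using hα)
    exact this.const_mul C
  have hb1 : ∀ x : ℝ, (1 + |x|) ^ (-α) ≤ 1 := fun x =>
    Real.rpow_le_one_of_one_le_of_nonpos (by linarith [abs_nonneg x]) (by linarith)
  have hpos : ∀ᶠ ε in nhdsWithin (0:ℝ) (Set.Ioi 0), 0 < ε := self_mem_nhdsWithin
  obtain ⟨η, hη, hM⟩ : ∃ η > 0, ∀ x : ℝ, dist x 0 < η → |f x| < |f 0| + 1 :=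
    Metric.eventually_nhds_iff.1 (hc.abs.eventually (gt_mem_nhds (by linarith)))
  set fA : ℝ → ℝ := (Metric.ball 0 η).indicator f with hfA
  set fB : ℝ → ℝ := (Metric.ball 0 η)ᶜ.indicator f with hfB
  have hfAi : Integrable fA := hf.indicator measurableSet_ball
  have hfBi : Integrable fB := hf.indicator measurableSet_ball.compl
  have hAB : ∀ x, f x = fA x + fB x := fun x => by
    rw [hfA, hfB, ← Pi.add_apply, Set.indicator_self_add_compl]
  have hfAb : ∀ x, |fA x| ≤ |f 0| + 1 := by
    intro x
    by_cases hx : x ∈ Metric.ball (0:ℝ) η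
    · rw [hfA, Set.indicator_of_mem hx]; exact (hM x hx).le
    · rw [hfA, Set.indicator_of_notMem hx, abs_zero]; positivity
  have hfA0 : fA 0 = f 0 := Set.indicator_of_mem (Metric.mem_ball_self hη) f
  have hfAc : ContinuousAt fA 0 := by
    refine hc.congr ?_
    filter_upwards [Metric.ball_mem_nhds (0:ℝ) hη] with x hx
    exact (Set.indicator_of_mem hx f).symm
  have hGb : ∀ ε, 0 < ε → ∀ x, |G ε x| ≤ C := fun ε hε x =>
    ((hG ε hε x).trans (hg x)).trans (mul_le_of_le_one_right hC (hb1 x))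
  have iA : ∀ ε, 0 < ε → Integrable (fun x => G ε x * fA (x * d ε)) := fun ε hε =>
    (hfAi.comp_mul_right' (hd ε hε).ne').bdd_mul (hGm ε hε).aestronglyMeasurable
      (Eventually.of_forall (hGb ε hε))
  have iB : ∀ ε, 0 < ε → Integrable (fun x => G ε x * fB (x * d ε)) := fun ε hε =>
    (hfBi.comp_mul_right' (hd ε hε).ne').bdd_mul (hGm ε hε).aestronglyMeasurable
      (Eventually.of_forall (hGb ε hε))
  have tA : Tendsto (fun ε => ∫ x, G ε x * fA (x * d ε)) (nhdsWithin 0 (Set.Ioi 0))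
      (nhds (∫ x, g x * f 0)) := by
    refine tendsto_integral_filter_of_dominated_convergence
      (fun x => (C * (1 + |x|) ^ (-α)) * (|f 0| + 1)) ?_ ?_ (hbdInt.mul_const _) ?_
    · filter_upwards [hpos] with ε hε using (iA ε hε).aestronglyMeasurable
    · filter_upwards [hpos] with ε hε
      refine Eventually.of_forall fun x => ?_
      rw [norm_mul, Real.norm_eq_abs, Real.norm_eq_abs]
      exact mul_le_mul ((hG ε hε x).trans (hg x)) (hfAb _) (abs_nonneg _) (by positivity)
    · filter_upwards [hlim] with x hx
      refine hx.mul ?_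
      rw [← hfA0]
      refine hfAc.tendsto.comp ?_
      simpa using hd0.const_mul x
  have tB : Tendsto (fun ε => ∫ x, G ε x * fB (x * d ε)) (nhdsWithin 0 (Set.Ioi 0))
      (nhds 0) := by
    have hz : Tendsto (fun ε => (C * η ^ (-α) * ∫ y, |fB y|) * (d ε) ^ (α - 1))
        (nhdsWithin 0 (Set.Ioi 0)) (nhds 0) := by
      have h1 : Tendsto (fun ε => (d ε) ^ (α - 1)) (nhdsWithin 0 (Set.Ioi 0))
          (nhds ((0:ℝ) ^ (α - 1))) :=
        hd0.rpow_const (Or.inr (by linarith))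
      rw [Real.zero_rpow (by linarith)] at h1
      simpa using h1.const_mul (C * η ^ (-α) * ∫ y, |fB y|)
    refine squeeze_zero_norm' ?_ hz
    filter_upwards [hpos] with ε hε
    have hdε := hd ε hε
    have e1 : ∫ x, |fB (x * d ε)| = (d ε)⁻¹ * ∫ y, |fB y| := by
      have := Measure.integral_comp_mul_right (fun y => |fB y|) (d ε)
      rw [this, abs_of_pos (inv_pos.2 hdε), smul_eq_mul]
    calc ‖∫ x, G ε x * fB (x * d ε)‖ ≤ ∫ x, (C * (η / d ε) ^ (-α)) * |fB (x * d ε)| := by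
          refine norm_integral_le_of_norm_le
            ((hfBi.comp_mul_right' hdε.ne').abs.const_mul _) (Eventually.of_forall fun x => ?_)
          rw [norm_mul, Real.norm_eq_abs, Real.norm_eq_abs]
          by_cases hx : x * d ε ∈ Metric.ball (0:ℝ) η
          · have : fB (x * d ε) = 0 := Set.indicator_of_notMem (by simpa using hx) f
            simp [this]
          · refine mul_le_mul_of_nonneg_right ?_ (abs_nonneg _)
            refine ((hG ε hε x).trans (hg x)).trans (mul_le_mul_of_nonneg_left ?_ hC)
            refine Real.rpow_le_rpow_of_nonpos (by positivity) ?_ (by linarith)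
            have hx' : η ≤ |x| * d ε := by
              simpa [abs_mul, abs_of_pos hdε] using hx
            have := (div_le_iff₀ hdε).2 hx'
            linarith
      _ = (C * η ^ (-α) * ∫ y, |fB y|) * (d ε) ^ (α - 1) := by
          rw [integral_const_mul, e1, Real.div_rpow hη.le hdε.le, Real.rpow_neg hdε.le,
            Real.rpow_sub_one hdε.ne']
          field_simp
  have hsum := tA.add tB
  rw [integral_mul_const, add_zero, mul_comm] at hsum
  refine hsum.congr' ?_
  filter_upwards [hpos] with ε hε
  rw [← integral_add (iA ε hε) (iB ε hε)]
  refine integral_congr_ae (Eventually.of_forall fun x => ?_)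
  simp only
  rw [hAB (x * d ε)]; ring

lemma decay_bound (c α x : ℝ) (hc : 0 < c) (hα : 1 < α) (hx : 0 ≤ x) :
    1 / (1 + c * x ^ α) ≤ (2 ^ α / min 1 c) * (1 + x) ^ (-α) := by
  have hm : 0 < min 1 c := lt_min one_pos hc
  have hxa : 0 ≤ x ^ α := Real.rpow_nonneg hx α
  have h1 : (1 + x) ^ α ≤ 2 ^ α * (1 + x ^ α) := by
    rcases le_total x 1 with h | h
    · calc (1 + x) ^ α ≤ 2 ^ α := Real.rpow_le_rpow (by linarith) (by linarith) (by linarith)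
        _ ≤ _ := le_mul_of_one_le_right (by positivity) (by linarith)
    · calc (1 + x) ^ α ≤ (2 * x) ^ α := Real.rpow_le_rpow (by linarith) (by linarith) (by linarith)
        _ = 2 ^ α * x ^ α := Real.mul_rpow (by norm_num) hx
        _ ≤ _ := by gcongr; linarith
  have h2 : min 1 c * (1 + x ^ α) ≤ 1 + c * x ^ α := by
    nlinarith [min_le_left 1 c, min_le_right 1 c, mul_le_mul_of_nonneg_right (min_le_right 1 c) hxa]
  have hp : 0 < (1 + x) ^ α := by positivity
  rw [Real.rpow_neg (by linarith), ← div_eq_mul_inv, div_div,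
    div_le_div_iff₀ (by positivity) (by positivity)]
  calc 1 * (min 1 c * (1 + x) ^ α) ≤ min 1 c * (2 ^ α * (1 + x ^ α)) := by
        rw [one_mul]; gcongr
    _ = 2 ^ α * (min 1 c * (1 + x ^ α)) := by ring
    _ ≤ _ := by gcongr


theorem frbe_dominated_convergence (k w b α γ μ t : ℝ)
    (hk0 : 0 < k) (hk1 : k < 1) (hw : w ≠ 0)
    (hb0 : 0 < b) (hb1 : b < 1) (hα : 1 < α) (hγ : 0 ≤ γ) (hμ : 0 < μ) (ht : 0 < t)
    (hlow : ∀ u : ℝ, 0 ≤ u → 1 / (1 + Real.Gamma (1-b) * u) ≤ mittagLeffler b (-u))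
    (hupp : ∀ u : ℝ, 0 ≤ u → mittagLeffler b (-u) ≤ 1 / (1 + u / Real.Gamma (1+b)))
    (hmono : ∀ u v : ℝ, 0 ≤ u → u ≤ v → mittagLeffler b (-v) ≤ mittagLeffler b (-u))
    : Filter.Tendsto
      (fun ε : ℝ => ∫ lam : ℝ,
        (mittagLeffler b (-(μ * |lam| ^ α * (1 + lam^2 * ε ^ (2*b/α)) ^ (γ/2) * t ^ b)))^2
          / mittagLeffler b (-(μ * t ^ b * |lam| ^ α))
          * specDen k w (lam * ε ^ (b/α)))
      (nhdsWithin 0 (Set.Ioi 0))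
      (nhds (specDen k w 0 * ∫ lam : ℝ, mittagLeffler b (-(μ * t ^ b * |lam| ^ α)))) := by
  set E : ℝ → ℝ := fun u => mittagLeffler b (-(max u 0)) with hE
  have hEu : ∀ u, 0 ≤ u → mittagLeffler b (-u) = E u := fun u hu => by
    simp only [hE, max_eq_left hu]
  have hEanti : Antitone E := fun u v huv =>
    hmono _ _ (le_max_right _ _) (max_le_max_right 0 huv)
  have hEpos : ∀ u, 0 < E u := fun u => by
    refine lt_of_lt_of_le ?_ (hlow _ (le_max_right u 0))
    have h1 : 0 < Real.Gamma (1 - b) := Real.Gamma_pos_of_pos (by linarith)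
    have h2 : 0 ≤ max u 0 := le_max_right _ _
    positivity
  have hEm : Measurable E := hEanti.measurable
  have htb : 0 < t ^ b := Real.rpow_pos_of_pos ht b
  set c := μ * t ^ b with hc
  have hcpos : 0 < c := by positivity
  have hGam : 0 < Real.Gamma (1 + b) := Real.Gamma_pos_of_pos (by linarith)
  set g : ℝ → ℝ := fun x => E (c * |x| ^ α) with hg
  set G : ℝ → ℝ → ℝ := fun ε x =>
    (E (c * |x| ^ α * (1 + x^2 * ε ^ (2*b/α)) ^ (γ/2)))^2 / E (c * |x| ^ α) with hG
  have hone : ∀ ε : ℝ, 0 < ε → ∀ x : ℝ, 1 ≤ (1 + x^2 * ε ^ (2*b/α)) ^ (γ/2) := fun ε hε x =>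
    Real.one_le_rpow (by have := Real.rpow_nonneg hε.le (2*b/α); nlinarith [mul_nonneg (sq_nonneg x) this]) (by linarith)
  have key := abstract_limit (specDen k w) (specDen_integrable k w hk0)
    (specDen_continuousAt k w hk0 hw) g (2 ^ α / min 1 (c / Real.Gamma (1+b))) α hα
    (by have : 0 < min 1 (c / Real.Gamma (1+b)) := lt_min one_pos (by positivity)
        positivity)
    (by
      intro x
      refine le_trans ?_ (decay_bound _ α |x| (by positivity) hα (abs_nonneg x))
      have h0 : 0 ≤ c * |x| ^ α := by positivity
      simp only [hg]
      rw [← hEu _ h0]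
      refine (hupp _ h0).trans (le_of_eq ?_)
      congr 2; ring)
    G
    (by
      intro ε hε
      simp only [hG]
      refine Measurable.div ((hEm.comp ?_).pow_const 2) (hEm.comp ?_) <;> fun_prop)
    (by
      intro ε hε x
      have h0 : 0 ≤ c * |x| ^ α := by positivity
      simp only [hG, hg]
      have h1 := hEpos (c * |x| ^ α)
      have h2 := hEpos (c * |x| ^ α * (1 + x^2 * ε ^ (2*b/α)) ^ (γ/2))
      have h3 : E (c * |x| ^ α * (1 + x^2 * ε ^ (2*b/α)) ^ (γ/2)) ≤ E (c * |x| ^ α) :=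
        hEanti (le_mul_of_one_le_right h0 (hone ε hε x))
      rw [abs_of_nonneg (by positivity), div_le_iff₀ h1, sq]
      exact mul_le_mul h3 h3 h2.le h1.le)
    (by
      have hcount : {x : ℝ | ¬ ContinuousAt E (c * |x| ^ α)}.Countable := by
        have hD := hEanti.countable_not_continuousAt
        have hinj : Set.InjOn (fun x : ℝ => c * x ^ α) (Set.Ici 0) := by
          intro x hx y hy hxy
          have := mul_left_cancel₀ hcpos.ne' hxy
          exact (Real.rpow_left_inj hx hy (by linarith)).1 this
        have hS : {y : ℝ | 0 ≤ y ∧ ¬ ContinuousAt E (c * y ^ α)}.Countable := by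
          refine Set.MapsTo.countable_of_injOn (t := {u | ¬ ContinuousAt E u})
            (f := fun x : ℝ => c * x ^ α) ?_ (hinj.mono ?_) hD
          · intro y hy; exact hy.2
          · intro y hy; exact hy.1
        refine (hS.union (hS.image (fun y => -y))).mono ?_
        intro x hx
        rcases le_total 0 x with h | h
        · left
          refine ⟨h, ?_⟩
          have := hx
          simpa [abs_of_nonneg h] using this
        · right
          refine ⟨-x, ⟨by linarith, ?_⟩, by simp⟩
          have := hx
          simpa [abs_of_nonpos h] using this
      have hae : ∀ᵐ x : ℝ, ContinuousAt E (c * |x| ^ α) := by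
        rw [ae_iff]; exact hcount.measure_zero _
      filter_upwards [hae] with x hx
      have hlimarg : Tendsto (fun ε : ℝ => c * |x| ^ α * (1 + x^2 * ε ^ (2*b/α)) ^ (γ/2))
          (nhdsWithin 0 (Set.Ioi 0)) (nhds (c * |x| ^ α)) := by
        have h1 : Tendsto (fun ε : ℝ => ε ^ (2*b/α)) (nhdsWithin 0 (Set.Ioi 0))
            (nhds ((0:ℝ) ^ (2*b/α))) :=
          (tendsto_nhdsWithin_of_tendsto_nhds tendsto_id).rpow_const (Or.inr (by positivity))
        rw [Real.zero_rpow (by positivity)] at h1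
        have h2 : Tendsto (fun ε : ℝ => (1 + x^2 * ε ^ (2*b/α)) ^ (γ/2)) (nhdsWithin 0 (Set.Ioi 0))
            (nhds ((1 + x^2 * 0) ^ (γ/2))) :=
          ((h1.const_mul (x^2)).const_add 1).rpow_const (Or.inr (by positivity))
        have h3 := h2.const_mul (c * |x| ^ α)
        simpa using h3
      have h4 := ((hx.tendsto.comp hlimarg).pow 2).div_const (E (c * |x| ^ α))
      have h5 : E (c * |x| ^ α) ^ 2 / E (c * |x| ^ α) = g x := by
        simp only [hg]
        have := (hEpos (c * |x| ^ α)).ne'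
        field_simp
      rw [h5] at h4
      exact h4)
    (fun ε => ε ^ (b/α)) (fun ε hε => Real.rpow_pos_of_pos hε _)
    (by
      have h1 : Tendsto (fun ε : ℝ => ε ^ (b/α)) (nhdsWithin 0 (Set.Ioi 0))
          (nhds ((0:ℝ) ^ (b/α))) :=
        (tendsto_nhdsWithin_of_tendsto_nhds tendsto_id).rpow_const (Or.inr (by positivity))
      rwa [Real.zero_rpow (by positivity)] at h1)
  have hgint : ∫ lam : ℝ, mittagLeffler b (-(c * |lam| ^ α)) = ∫ x, g x := by
    refine integral_congr_ae (Eventually.of_forall fun x => ?_)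
    exact hEu _ (by positivity)
  rw [hgint]
  refine key.congr' ?_
  filter_upwards [self_mem_nhdsWithin] with ε hε
  have hε : 0 < ε := hε
  refine integral_congr_ae (Eventually.of_forall fun x => ?_)
  simp only [hG]
  have h0 : 0 ≤ c * |x| ^ α := by positivity
  have h1 : 0 ≤ c * |x| ^ α * (1 + x^2 * ε ^ (2*b/α)) ^ (γ/2) :=
    mul_nonneg h0 (by linarith [hone ε hε x])
  have h2 : μ * |x| ^ α * (1 + x^2 * ε ^ (2*b/α)) ^ (γ/2) * t ^ b
      = c * |x| ^ α * (1 + x^2 * ε ^ (2*b/α)) ^ (γ/2) := by rw [hc]; ring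
  rw [h2, hEu _ h1, hEu _ h0]
end
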